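/- arXiv:1509.07941 — 2 statements merged into one kernel-verified Lean document; each statement's English description precedes it below -/
import Mathlib

section
/- Fix t > 0. Let j(n) be any sequence of real numbers satisfying j(n) − ( e·√n − (1/4)·log n − (1/2)·log(2πt) − e²/4 − 1/2 ) → 0 as n → ∞. Then λ(n) := Γ(n+1) / ( Γ(j(n)+1)² · Γ(n−j(n)+1) ) → t as n → ∞, where Γ denotes the Gamma function (so that λ(n) = C(n,j)/j! when j is an integer). -/
open scoped Classical
open Filter

noncomputable section

/-- `τ` occurs in `σ` at the strictly increasing positions given by `f`:
`f` is strictly increasing and `σ ∘ f` is order-isomorphic to `τ`. -/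
def OccursAt {m n : ℕ} (τ : Equiv.Perm (Fin m)) (σ : Equiv.Perm (Fin n))
    (f : Fin m → Fin n) : Prop :=
  StrictMono f ∧ ∀ k l, σ (f k) < σ (f l) ↔ τ k < τ l

/-- `τ` occurs in `σ` at the set of positions `α` (listed in increasing order). -/
def OccursOn {m n : ℕ} (τ : Equiv.Perm (Fin m)) (σ : Equiv.Perm (Fin n))
    (α : Finset (Fin n)) : Prop :=
  ∃ f : Fin m → Fin n, StrictMono f ∧ Finset.univ.image f = α ∧
    ∀ k l, σ (f k) < σ (f l) ↔ τ k < τ l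

/-- `τ` occurs in `σ` at the consecutive (0-indexed) positions `i, i+1, …, i+m-1`. -/
def OccursConsec {m n : ℕ} (τ : Equiv.Perm (Fin m)) (σ : Equiv.Perm (Fin n)) (i : ℕ) : Prop :=
  ∃ h : i + m ≤ n, ∀ k l : Fin m,
    σ ⟨i + k, by have := k.isLt; omega⟩ < σ ⟨i + l, by have := l.isLt; omega⟩ ↔ τ k < τ l

/-- The overlap count `L_s(τ)`: the number of permutations of `[2m-s]` containing
two occurrences of `τ` at index sets sharing exactly `s` elements. -/
def overlapCount {m : ℕ} (τ : Equiv.Perm (Fin m)) (s : ℕ) : ℕ :=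
  Set.ncard {ρ : Equiv.Perm (Fin (2 * m - s)) |
    ∃ α β : Finset (Fin (2 * m - s)), α.card = m ∧ β.card = m ∧ (α ∩ β).card = s ∧
      OccursOn τ ρ α ∧ OccursOn τ ρ β}

/-- The sequential overlap count `L̄_s(τ)`: the number of permutations of `[2m-s]` with
occurrences of `τ` at positions `(1,…,m)` and `(m-s+1,…,2m-s)`. -/
def seqOverlapCount {m : ℕ} (τ : Equiv.Perm (Fin m)) (s : ℕ) : ℕ :=
  Set.ncard {ρ : Equiv.Perm (Fin (2 * m - s)) |
    OccursConsec τ ρ 0 ∧ OccursConsec τ ρ (m - s)}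

/-- The number of inversions of a permutation. -/
def invCount {n : ℕ} (σ : Equiv.Perm (Fin n)) : ℕ :=
  (Finset.univ.filter fun p : Fin n × Fin n => p.1 < p.2 ∧ σ p.2 < σ p.1).card

/-- The inversion polynomial `I_n(q) = ∏_{j=1}^n (1 + q + ⋯ + q^{j-1})`. -/
def invPoly (n : ℕ) (q : ℝ) : ℝ :=
  ∏ j ∈ Finset.range n, ∑ i ∈ Finset.range (j + 1), q ^ i

/-- Probability of the event `E` under the uniform distribution on `S_n`. -/
def unifProb {n : ℕ} (E : Set (Equiv.Perm (Fin n))) : ℝ :=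
  (E.ncard : ℝ) / (n.factorial : ℝ)

/-- Probability of the event `E` under the Mallows(q) distribution on `S_n`. -/
def mallowsProb {n : ℕ} (q : ℝ) (E : Set (Equiv.Perm (Fin n))) : ℝ :=
  (∑ σ ∈ Finset.univ.filter (· ∈ E), q ^ invCount σ) / invPoly n q

/-- Expectation of `X` under the uniform distribution on `S_n`. -/
def unifExp {n : ℕ} (X : Equiv.Perm (Fin n) → ℝ) : ℝ :=
  (∑ σ : Equiv.Perm (Fin n), X σ) / (n.factorial : ℝ)

/-- Expectation of `X` under the Mallows(q) distribution on `S_n`. -/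
def mallowsExp {n : ℕ} (q : ℝ) (X : Equiv.Perm (Fin n) → ℝ) : ℝ :=
  (∑ σ : Equiv.Perm (Fin n), X σ * q ^ invCount σ) / invPoly n q

/-- The Poisson(lam) probability mass function. -/
def poissonPMF (lam : ℝ) (k : ℕ) : ℝ :=
  Real.exp (-lam) * lam ^ k / (k.factorial : ℝ)

/-- Total variation distance between the law of the ℕ-valued statistic `W` of a uniformly
random permutation of `[n]` and the Poisson(lam) distribution. -/
def dTVNatUnif {n : ℕ} (W : Equiv.Perm (Fin n) → ℕ) (lam : ℝ) : ℝ :=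
  (1 / 2) * ∑' k : ℕ, |unifProb {σ | W σ = k} - poissonPMF lam k|

/-- Total variation distance between the law of the ℕ-valued statistic `W` of a Mallows(q)
random permutation of `[n]` and the Poisson(lam) distribution. -/
def dTVNatMallows {n : ℕ} (q : ℝ) (W : Equiv.Perm (Fin n) → ℕ) (lam : ℝ) : ℝ :=
  (1 / 2) * ∑' k : ℕ, |mallowsProb q {σ | W σ = k} - poissonPMF lam k|

/-- Total variation distance between the joint law of the indicator family
`(X_α)_{α ∈ I}` of a uniformly random permutation of `[n]` and the joint law of
independent Bernoulli random variables with marginals `p`. -/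
def dTVFamUnif {n : ℕ} {I : Type*} [Fintype I] [DecidableEq I]
    (X : Equiv.Perm (Fin n) → I → Prop) (p : I → ℝ) : ℝ :=
  (1 / 2) * ∑ x : I → Bool,
    |unifProb {σ | ∀ α, X σ α ↔ x α = true} - ∏ α, (if x α then p α else 1 - p α)|

/-- Total variation distance between the joint law of the indicator family
`(X_α)_{α ∈ I}` of a Mallows(q) random permutation of `[n]` and the joint law of
independent Bernoulli random variables with marginals `p`. -/
def dTVFamMallows {n : ℕ} (q : ℝ) {I : Type*} [Fintype I] [DecidableEq I]
    (X : Equiv.Perm (Fin n) → I → Prop) (p : I → ℝ) : ℝ :=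
  (1 / 2) * ∑ x : I → Bool,
    |mallowsProb q {σ | ∀ α, X σ α ↔ x α = true} - ∏ α, (if x α then p α else 1 - p α)|

/-!
Write `S x = x log x - x + log (2πx) / 2`. Stirling's formula `log Γ(x + 1) = S x + o(1)` passes
from integers to real `x` because log-convexity pins `log Γ(N + θ + 1)` for `0 ≤ θ ≤ 1` between
`log N! + θ log N` and `log N! + θ log (N + 1)`. Everything else is the expansion
`S (a + h) = S a + h log a + h² / (2a) + o(1)`, valid for `h³ / a² → 0`.

Let `j = e√x + d` with `d = o(x^(1/4))`. Expanding about `x` with `h = -j` gives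
`S x - S (x - j) = j log x - e² / 2 + o(1)`. Expanding about `e√x` with `h = d` gives
`2 S j = j log x + (log x) / 2 + 2 d + log (2π) + 1 + o(1)`, since `2 log (e√x) = log x + 2`.
The terms `j log x` cancel, so the logarithm of the ratio is
`-2 d - (log x) / 2 - e² / 2 - log (2π) - 1 + o(1)`, and the prescribed `d` turns this into `log t`.
-/

open Asymptotics Real Topology

/-- Stirling's approximation `x log x - x + log (2πx) / 2` to `log Γ(x + 1)`. -/
def logStirling (x : ℝ) : ℝ :=
  x * log x - x + log (2 * π * x) / 2

lemma abs_one_add_mul_log_one_add_sub_le {z : ℝ} (hz : |z| ≤ 1 / 2) :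
    |(1 + z) * log (1 + z) - z - z ^ 2 / 2| ≤ 4 * |z| ^ 3 := by
  have hlog : |log (1 + z) - (z - z ^ 2 / 2)| ≤ 2 * |z| ^ 3 := by
    have htaylor := abs_log_sub_add_sum_range_le (x := -z) (by rw [abs_neg]; linarith) 2
    have hsum : (∑ i ∈ Finset.range 2, (-z) ^ (i + 1) / ((i : ℝ) + 1)) + log (1 - -z) =
        log (1 + z) - (z - z ^ 2 / 2) := by
      norm_num [Finset.sum_range_succ]
      ring
    rw [hsum, abs_neg] at htaylor
    calc |log (1 + z) - (z - z ^ 2 / 2)| ≤ |z| ^ 3 / (1 - |z|) := htaylor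
      _ ≤ |z| ^ 3 / (1 / 2) := by gcongr; linarith
      _ = 2 * |z| ^ 3 := by ring
  obtain ⟨hz₁, hz₂⟩ := abs_le.mp hz
  calc |(1 + z) * log (1 + z) - z - z ^ 2 / 2|
      = |(1 + z) * (log (1 + z) - (z - z ^ 2 / 2)) - z ^ 3 / 2| := by ring_nf
    _ ≤ |1 + z| * |log (1 + z) - (z - z ^ 2 / 2)| + |z| ^ 3 / 2 := by
      refine (abs_sub _ _).trans_eq ?_
      rw [abs_mul, abs_div, abs_pow, abs_two]
    _ ≤ 3 / 2 * (2 * |z| ^ 3) + |z| ^ 3 / 2 := by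
      gcongr
      exact abs_le.mpr ⟨by linarith, by linarith⟩
    _ ≤ 4 * |z| ^ 3 := by linarith [pow_nonneg (abs_nonneg z) 3]

lemma logStirling_add_sub_eq {a h : ℝ} (ha : 0 < a) (hah : 0 < 1 + h / a) :
    logStirling (a + h) - logStirling a - h * log a - h ^ 2 / (2 * a) =
      a * ((1 + h / a) * log (1 + h / a) - h / a - (h / a) ^ 2 / 2) + log (1 + h / a) / 2 := by
  have hfactor : a + h = a * (1 + h / a) := by field_simp
  have hlog : log (a + h) = log a + log (1 + h / a) := by
    rw [hfactor, log_mul ha.ne' hah.ne']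
  have hlog' : log (2 * π * (a + h)) = log (2 * π * a) + log (1 + h / a) := by
    rw [hfactor, ← mul_assoc, log_mul (by positivity) hah.ne']
  rw [logStirling, logStirling, hlog, hlog']
  field_simp
  ring

lemma log_exp_one_mul_sqrt {x : ℝ} (hx : 0 < x) : log (exp 1 * √x) = 1 + log x / 2 := by
  rw [log_mul (exp_ne_zero 1) (by positivity), log_exp, log_sqrt hx.le]

lemma logStirling_exp_one_mul_sqrt {x : ℝ} (hx : 0 < x) :
    logStirling (exp 1 * √x) =
      exp 1 * √x * log x / 2 + log (2 * π) / 2 + 1 / 2 + log x / 4 := by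
  rw [logStirling, log_mul (x := 2 * π) (by positivity) (by positivity), log_exp_one_mul_sqrt hx]
  ring

section Expansion

variable {ι : Type*} {l : Filter ι} {a h : ι → ℝ}

lemma tendsto_div_zero_of_pow_div_pow {k : ℕ} (ha : Tendsto a l atTop)
    (hh : Tendsto (fun i => h i ^ (k + 1) / a i ^ k) l (𝓝 0)) :
    Tendsto (fun i => h i / a i) l (𝓝 0) := by
  have hpow : Tendsto (fun i => (h i / a i) ^ (k + 1)) l (𝓝 0) := by
    refine (hh.div_atTop ha).congr fun i => ?_
    rw [div_div, ← pow_succ, div_pow]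
  rw [← isLittleO_one_iff ℝ] at hpow ⊢
  refine IsLittleO.of_pow (n := k + 1) ?_ k.succ_ne_zero
  simpa only [Pi.pow_def, one_pow] using hpow

lemma tendsto_logStirling_add_sub_of_cube (ha : Tendsto a l atTop)
    (hh : Tendsto (fun i => h i ^ 3 / a i ^ 2) l (𝓝 0)) :
    Tendsto (fun i => logStirling (a i + h i) - logStirling (a i) - h i * log (a i) -
      h i ^ 2 / (2 * a i)) l (𝓝 0) := by
  have hratio : Tendsto (fun i => h i / a i) l (𝓝 0) := tendsto_div_zero_of_pow_div_pow ha hh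
  have hlog : Tendsto (fun i => log (1 + h i / a i) / 2) l (𝓝 0) := by
    simpa using ((hratio.const_add 1).log (by norm_num)).div_const 2
  have hsmall : ∀ᶠ i in l, |h i / a i| ≤ 1 / 2 := hratio.abs.eventually_le_const (by norm_num)
  have hremainder : Tendsto (fun i =>
      a i * ((1 + h i / a i) * log (1 + h i / a i) - h i / a i - (h i / a i) ^ 2 / 2))
      l (𝓝 0) := by
    refine squeeze_zero_norm' (a := fun i => 4 * |h i ^ 3 / a i ^ 2|) ?_
      (by simpa using hh.abs.const_mul 4)
    filter_upwards [ha.eventually_gt_atTop 0, hsmall] with i hai hi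
    calc ‖a i * ((1 + h i / a i) * log (1 + h i / a i) - h i / a i - (h i / a i) ^ 2 / 2)‖
        ≤ a i * (4 * |h i / a i| ^ 3) := by
          rw [norm_mul, norm_of_nonneg hai.le, norm_eq_abs]
          gcongr
          exact abs_one_add_mul_log_one_add_sub_le hi
      _ = 4 * |h i ^ 3 / a i ^ 2| := by
          simp only [abs_div, abs_pow, abs_of_pos hai]
          field_simp
  have hsum := hremainder.add hlog
  rw [add_zero] at hsum
  refine hsum.congr' ?_
  filter_upwards [ha.eventually_gt_atTop 0, hsmall] with i hai hi
  exact (logStirling_add_sub_eq hai (by linarith [neg_le_of_abs_le hi])).symm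

lemma tendsto_logStirling_add_sub_of_sq (ha : Tendsto a l atTop)
    (hh : Tendsto (fun i => h i ^ 2 / a i) l (𝓝 0)) :
    Tendsto (fun i => logStirling (a i + h i) - logStirling (a i) - h i * log (a i))
      l (𝓝 0) := by
  have hratio : Tendsto (fun i => h i / a i) l (𝓝 0) :=
    tendsto_div_zero_of_pow_div_pow (k := 1) ha (by simpa only [pow_one] using hh)
  have hcube : Tendsto (fun i => h i ^ 3 / a i ^ 2) l (𝓝 0) := by
    have hmul := hh.mul hratio
    rw [mul_zero] at hmul
    exact hmul.congr fun i => by rw [div_mul_div_comm, ← pow_succ, ← pow_two]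
  have hsum := (tendsto_logStirling_add_sub_of_cube ha hcube).add (hh.div_const 2)
  rw [zero_div, add_zero] at hsum
  exact hsum.congr fun i => by ring

end Expansion

section Stirling

lemma tendsto_log_factorial_sub_logStirling :
    Tendsto (fun n : ℕ => log n.factorial - logStirling n) atTop (𝓝 0) := by
  have hseq : Tendsto (fun n : ℕ => log (Stirling.stirlingSeq n) - log √π) atTop (𝓝 0) := by
    simpa using (Stirling.tendsto_stirlingSeq_sqrt_pi.log (by positivity)).sub_const (log √π)
  refine hseq.congr' ?_
  filter_upwards [eventually_gt_atTop 0] with n hn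
  have hn' : (n : ℝ) ≠ 0 := by exact_mod_cast hn.ne'
  rw [Stirling.log_stirlingSeq_formula, logStirling, log_sqrt pi_pos.le,
    log_div hn' (exp_ne_zero 1), log_exp, log_mul two_ne_zero hn',
    log_mul (by positivity) hn', log_mul two_ne_zero pi_ne_zero]
  ring

lemma log_Gamma_add_one {y : ℝ} (hy : 0 < y) :
    log (Gamma (y + 1)) = log (Gamma y) + log y := by
  rw [Gamma_add_one hy.ne', log_mul hy.ne' (Gamma_pos_of_pos hy).ne', add_comm]

lemma log_Gamma_nat_add_add_one_mem_Icc {n : ℕ} (hn : n ≠ 0) {θ : ℝ} (hθ₀ : 0 ≤ θ)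
    (hθ₁ : θ ≤ 1) :
    log (Gamma (n + θ + 1)) ∈
      Set.Icc (log n.factorial + θ * log n) (log n.factorial + θ * log (n + 1)) := by
  rcases hθ₀.eq_or_lt with rfl | hθ
  · simp [Gamma_nat_eq_factorial]
  have hlower := BohrMollerup.f_add_nat_ge convexOn_log_Gamma log_Gamma_add_one
    (n := n + 1) (by omega) hθ
  have hupper := BohrMollerup.f_add_nat_le convexOn_log_Gamma log_Gamma_add_one
    n.succ_ne_zero hθ hθ₁
  simp only [Function.comp_apply, Nat.succ_eq_add_one, Nat.cast_add_one, add_sub_cancel_right,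
    Gamma_nat_eq_factorial, add_right_comm (n : ℝ) 1 θ] at hlower hupper
  exact ⟨hlower, hupper⟩

lemma log_Gamma_add_one_sub_log_floor_factorial_mem_Icc {x : ℝ} (hx : 1 ≤ x) :
    log (Gamma (x + 1)) - log ⌊x⌋₊.factorial - (x - ⌊x⌋₊) * log ⌊x⌋₊ ∈
      Set.Icc 0 (log (⌊x⌋₊ + 1) - log ⌊x⌋₊) := by
  have hfloor : 0 < ⌊x⌋₊ := Nat.floor_pos.mpr hx
  have hfract₀ : 0 ≤ x - ⌊x⌋₊ := sub_nonneg.mpr (Nat.floor_le (by linarith))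
  have hfract₁ : x - ⌊x⌋₊ ≤ 1 := by linarith [Nat.lt_floor_add_one x]
  have hlog : 0 ≤ log (⌊x⌋₊ + 1) - log ⌊x⌋₊ :=
    sub_nonneg.mpr (log_le_log (by exact_mod_cast hfloor) (by linarith))
  obtain ⟨hlower, hupper⟩ := log_Gamma_nat_add_add_one_mem_Icc hfloor.ne' hfract₀ hfract₁
  rw [add_sub_cancel] at hlower hupper
  exact ⟨by linarith, by linarith [mul_le_of_le_one_left hlog hfract₁]⟩

lemma tendsto_log_Gamma_add_one_sub_log_floor_factorial :
    Tendsto (fun x : ℝ => log (Gamma (x + 1)) - log ⌊x⌋₊.factorial - (x - ⌊x⌋₊) * log ⌊x⌋₊)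
      atTop (𝓝 0) := by
  have hbounds := (eventually_ge_atTop 1).mono fun x =>
    log_Gamma_add_one_sub_log_floor_factorial_mem_Icc (x := x)
  exact squeeze_zero' (hbounds.mono fun x hx => hx.1) (hbounds.mono fun x hx => hx.2)
    (tendsto_log_nat_add_one_sub_log.comp tendsto_nat_floor_atTop)

theorem tendsto_log_Gamma_add_one_sub_logStirling :
    Tendsto (fun x : ℝ => log (Gamma (x + 1)) - logStirling x) atTop (𝓝 0) := by
  have hfloor : Tendsto (fun x : ℝ => (⌊x⌋₊ : ℝ)) atTop atTop :=
    tendsto_natCast_atTop_atTop.comp tendsto_nat_floor_atTop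
  have hfract : Tendsto (fun x : ℝ => (x - ⌊x⌋₊) ^ 2 / ⌊x⌋₊) atTop (𝓝 0) := by
    refine squeeze_zero' (.of_forall fun x => by positivity) ?_ hfloor.inv_tendsto_atTop
    filter_upwards [eventually_ge_atTop 0] with x hx
    have hsq : (x - ⌊x⌋₊) ^ 2 ≤ 1 :=
      pow_le_one₀ (sub_nonneg.mpr (Nat.floor_le hx)) (by linarith [Nat.lt_floor_add_one x])
    simpa [div_eq_mul_inv] using mul_le_mul_of_nonneg_right hsq (by positivity)
  have hsum := (tendsto_log_Gamma_add_one_sub_log_floor_factorial.add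
    (tendsto_log_factorial_sub_logStirling.comp tendsto_nat_floor_atTop)).sub
    (tendsto_logStirling_add_sub_of_sq hfloor hfract)
  rw [add_zero, sub_zero] at hsum
  refine hsum.congr fun x => ?_
  simp only [Function.comp_apply, add_sub_cancel]
  ring

lemma log_Gamma_div_Gamma_sq_mul_Gamma {x j : ℝ} (hx : 0 < x + 1) (hj : 0 < j + 1)
    (hxj : 0 < x - j + 1) :
    log (Gamma (x + 1) / (Gamma (j + 1) ^ 2 * Gamma (x - j + 1))) =
      log (Gamma (x + 1)) - 2 * log (Gamma (j + 1)) - log (Gamma (x - j + 1)) := by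
  have hΓj : Gamma (j + 1) ^ 2 ≠ 0 := pow_ne_zero 2 (Gamma_pos_of_pos hj).ne'
  have hΓxj : Gamma (x - j + 1) ≠ 0 := (Gamma_pos_of_pos hxj).ne'
  rw [log_div (Gamma_pos_of_pos hx).ne' (mul_ne_zero hΓj hΓxj), log_mul hΓj hΓxj, log_pow]
  push_cast
  ring

end Stirling

section CriticalWindow

variable {ι : Type*} {l : Filter ι} {x j : ι → ℝ} {c : ℝ}

lemma tendsto_div_zero_of_tendsto_div_sqrt (hx : Tendsto x l atTop)
    (hj : Tendsto (fun i => j i / √(x i)) l (𝓝 c)) :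
    Tendsto (fun i => j i / x i) l (𝓝 0) := by
  refine (hj.div_atTop (tendsto_sqrt_atTop.comp hx)).congr' ?_
  filter_upwards [hx.eventually_ge_atTop 0] with i hi
  rw [Function.comp_apply, div_div, mul_self_sqrt hi]

lemma tendsto_sub_atTop_of_tendsto_div_sqrt (hx : Tendsto x l atTop)
    (hj : Tendsto (fun i => j i / √(x i)) l (𝓝 c)) :
    Tendsto (fun i => x i - j i) l atTop := by
  have hratio : Tendsto (fun i => 1 - j i / x i) l (𝓝 1) := by
    simpa using (tendsto_div_zero_of_tendsto_div_sqrt hx hj).const_sub 1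
  refine (hratio.pos_mul_atTop one_pos hx).congr' ?_
  filter_upwards [hx.eventually_ne_atTop 0] with i hi
  field_simp

lemma tendsto_atTop_of_tendsto_div_sqrt (hc : 0 < c) (hx : Tendsto x l atTop)
    (hj : Tendsto (fun i => j i / √(x i)) l (𝓝 c)) :
    Tendsto j l atTop := by
  have hsqrt : Tendsto (fun i => √(x i)) l atTop := tendsto_sqrt_atTop.comp hx
  refine (hj.pos_mul_atTop hc hsqrt).congr' ?_
  filter_upwards [hsqrt.eventually_ne_atTop 0] with i hi
  exact div_mul_cancel₀ _ hi

lemma tendsto_logStirling_sub_logStirling_sub (hx : Tendsto x l atTop)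
    (hj : Tendsto (fun i => j i / √(x i)) l (𝓝 c)) :
    Tendsto (fun i => logStirling (x i) - logStirling (x i - j i) - j i * log (x i))
      l (𝓝 (-c ^ 2 / 2)) := by
  have hsq : Tendsto (fun i => j i ^ 2 / x i) l (𝓝 (c ^ 2)) := by
    refine (hj.pow 2).congr' ?_
    filter_upwards [hx.eventually_ge_atTop 0] with i hi
    rw [div_pow, sq_sqrt hi]
  have hcube : Tendsto (fun i => (-j i) ^ 3 / x i ^ 2) l (𝓝 0) := by
    have hmul := (hsq.mul (tendsto_div_zero_of_tendsto_div_sqrt hx hj)).neg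
    rw [mul_zero, neg_zero] at hmul
    refine hmul.congr fun i => ?_
    rw [div_mul_div_comm, ← pow_succ, ← pow_two, Odd.neg_pow (by decide), neg_div]
  have hsub := ((tendsto_logStirling_add_sub_of_cube hx hcube).add (hsq.div_const 2)).neg
  rw [zero_add, ← neg_div] at hsub
  refine hsub.congr fun i => ?_
  rw [← sub_eq_add_neg]
  ring

lemma tendsto_div_sqrt_of_sq_div_sqrt (hx : Tendsto x l atTop)
    (hj : Tendsto (fun i => (j i - c * √(x i)) ^ 2 / √(x i)) l (𝓝 0)) :
    Tendsto (fun i => j i / √(x i)) l (𝓝 c) := by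
  have hsqrt : Tendsto (fun i => √(x i)) l atTop := tendsto_sqrt_atTop.comp hx
  have hdev : Tendsto (fun i => (j i - c * √(x i)) / √(x i)) l (𝓝 0) :=
    tendsto_div_zero_of_pow_div_pow (k := 1) hsqrt (by simpa only [pow_one] using hj)
  have hsum := hdev.add_const c
  rw [zero_add] at hsum
  refine hsum.congr' ?_
  filter_upwards [hsqrt.eventually_ne_atTop 0] with i hi
  field_simp
  ring

lemma tendsto_two_mul_logStirling_sub (hx : Tendsto x l atTop)
    (hj : Tendsto (fun i => (j i - exp 1 * √(x i)) ^ 2 / √(x i)) l (𝓝 0)) :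
    Tendsto (fun i => 2 * logStirling (j i) - j i * log (x i) - log (x i) / 2 -
      2 * (j i - exp 1 * √(x i))) l (𝓝 (log (2 * π) + 1)) := by
  have hcenter : Tendsto (fun i => exp 1 * √(x i)) l atTop :=
    (tendsto_sqrt_atTop.comp hx).const_mul_atTop (exp_pos 1)
  have hdev : Tendsto (fun i => (j i - exp 1 * √(x i)) ^ 2 / (exp 1 * √(x i))) l (𝓝 0) := by
    have hdiv := hj.div_const (exp 1)
    rw [zero_div] at hdiv
    exact hdiv.congr fun i => by rw [div_div, mul_comm (exp 1)]
  have hexpand := ((tendsto_logStirling_add_sub_of_sq hcenter hdev).const_mul 2).add_const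
    (log (2 * π) + 1)
  rw [mul_zero, zero_add] at hexpand
  refine hexpand.congr' ?_
  filter_upwards [hx.eventually_gt_atTop 0] with i hi
  rw [add_sub_cancel, logStirling_exp_one_mul_sqrt hi, log_exp_one_mul_sqrt hi]
  ring

lemma eventually_Gamma_div_Gamma_sq_mul_Gamma_pos (hc : 0 < c) (hx : Tendsto x l atTop)
    (hj : Tendsto (fun i => j i / √(x i)) l (𝓝 c)) :
    ∀ᶠ i in l, 0 < Gamma (x i + 1) / (Gamma (j i + 1) ^ 2 * Gamma (x i - j i + 1)) := by
  filter_upwards [(tendsto_atTop_of_tendsto_div_sqrt hc hx hj).eventually_gt_atTop 0,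
    (tendsto_sub_atTop_of_tendsto_div_sqrt hx hj).eventually_gt_atTop 0] with i hji hsubi
  have hΓx : 0 < Gamma (x i + 1) := Gamma_pos_of_pos (by linarith)
  have hΓj : 0 < Gamma (j i + 1) := Gamma_pos_of_pos (by linarith)
  have hΓsub : 0 < Gamma (x i - j i + 1) := Gamma_pos_of_pos (by linarith)
  exact div_pos hΓx (mul_pos (pow_pos hΓj 2) hΓsub)

theorem tendsto_log_Gamma_div_Gamma_sq_mul_Gamma_add (hx : Tendsto x l atTop)
    (hj : Tendsto (fun i => (j i - exp 1 * √(x i)) ^ 2 / √(x i)) l (𝓝 0)) :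
    Tendsto (fun i => log (Gamma (x i + 1) / (Gamma (j i + 1) ^ 2 * Gamma (x i - j i + 1))) +
      (2 * (j i - exp 1 * √(x i)) + log (x i) / 2)) l
      (𝓝 (-exp 1 ^ 2 / 2 - (log (2 * π) + 1))) := by
  have hratio := tendsto_div_sqrt_of_sq_div_sqrt hx hj
  have hj_top := tendsto_atTop_of_tendsto_div_sqrt (exp_pos 1) hx hratio
  have hsub_top := tendsto_sub_atTop_of_tendsto_div_sqrt hx hratio
  have hstirling := (tendsto_logStirling_sub_logStirling_sub hx hratio).sub
    (tendsto_two_mul_logStirling_sub hx hj)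
  have hΓ := tendsto_log_Gamma_add_one_sub_logStirling
  have herror := ((hΓ.comp hx).sub ((hΓ.comp hj_top).const_mul 2)).sub (hΓ.comp hsub_top)
  have hsum := herror.add hstirling
  simp only [mul_zero, sub_zero, zero_add] at hsum
  refine hsum.congr' ?_
  filter_upwards [hj_top.eventually_gt_atTop 0,
    hsub_top.eventually_gt_atTop 0] with i hji hsubi
  rw [log_Gamma_div_Gamma_sq_mul_Gamma (by linarith) (by linarith) (by linarith)]
  simp only [Function.comp_apply]
  ring

lemma tendsto_sq_div_sqrt_of_isBigO_log {d : ι → ℝ} (hx : Tendsto x l atTop)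
    (hd : d =O[l] fun i => log (x i)) :
    Tendsto (fun i => d i ^ 2 / √(x i)) l (𝓝 0) := by
  have hlog : (fun y : ℝ => log y ^ 2) =o[atTop] fun y => √y := by
    simpa only [rpow_two, ← sqrt_eq_rpow] using
      isLittleO_log_rpow_rpow_atTop (s := 1 / 2) 2 (by norm_num)
  exact ((hd.pow 2).trans_isLittleO (hlog.comp_tendsto hx)).tendsto_div_nhds_zero

lemma tendsto_sq_div_sqrt_of_tendsto_sub_log {d : ι → ℝ} {b : ℝ} (hx : Tendsto x l atTop)
    (hd : Tendsto (fun i => d i - b * log (x i)) l (𝓝 c)) :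
    Tendsto (fun i => d i ^ 2 / √(x i)) l (𝓝 0) := by
  refine tendsto_sq_div_sqrt_of_isBigO_log hx ?_
  have hconst : (fun _ : ι => (1 : ℝ)) =o[l] fun i => log (x i) :=
    isLittleO_const_log_atTop.comp_tendsto hx
  have hrest := (hd.isBigO_one ℝ).trans hconst.isBigO
  refine (hrest.add ((isBigO_refl (fun i => log (x i)) l).const_mul_left b)).congr_left
    fun i => sub_add_cancel _ _

end CriticalWindow

theorem stmt10_general {ι : Type*} {l : Filter ι} {x j : ι → ℝ} {t : ℝ} (ht : 0 < t)
    (hx : Tendsto x l atTop)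
    (hj : Tendsto (fun i => j i - (exp 1 * √(x i) - 1 / 4 * log (x i)
      - 1 / 2 * log (2 * π * t) - exp 1 ^ 2 / 4 - 1 / 2)) l (𝓝 0)) :
    Tendsto (fun i => Gamma (x i + 1) / (Gamma (j i + 1) ^ 2 * Gamma (x i - j i + 1)))
      l (𝓝 t) := by
  obtain ⟨c, hc⟩ : ∃ c, c = 1 / 2 * log (2 * π * t) + exp 1 ^ 2 / 4 + 1 / 2 := ⟨_, rfl⟩
  have hdev : Tendsto (fun i => j i - exp 1 * √(x i) - -(1 / 4) * log (x i)) l (𝓝 (-c)) := by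
    have hsub := hj.sub_const c
    rw [zero_sub] at hsub
    exact hsub.congr fun i => by rw [hc]; ring
  have hlimit : -exp 1 ^ 2 / 2 - (log (2 * π) + 1) - 2 * -c = log t := by
    rw [hc, log_mul (by positivity) ht.ne']
    ring
  have hsq := tendsto_sq_div_sqrt_of_tendsto_sub_log hx hdev
  have hlog : Tendsto (fun i =>
      log (Gamma (x i + 1) / (Gamma (j i + 1) ^ 2 * Gamma (x i - j i + 1)))) l (𝓝 (log t)) := by
    rw [← hlimit]
    exact ((tendsto_log_Gamma_div_Gamma_sq_mul_Gamma_add hx hsq).sub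
      (hdev.const_mul 2)).congr fun i => by ring
  have hexp := (continuous_exp.tendsto _).comp hlog
  rw [exp_log ht] at hexp
  refine hexp.congr' ?_
  filter_upwards [eventually_Gamma_div_Gamma_sq_mul_Gamma_pos (exp_pos 1) hx
    (tendsto_div_sqrt_of_sq_div_sqrt hx hsq)] with i hi
  exact exp_log hi

/-- Lemma (McKay): if `j(n) = e·√n − (1/4)·log n − (1/2)·log(2πt) − e²/4 − 1/2 + o(1)`, then
`λ(n) = Γ(n+1)/(Γ(j(n)+1)²·Γ(n−j(n)+1)) → t`. -/
theorem stmt10 (t : ℝ) (ht : 0 < t) (j : ℕ → ℝ)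
    (hj : Filter.Tendsto (fun n : ℕ => j n -
        (Real.exp 1 * Real.sqrt n - (1 / 4) * Real.log n
          - (1 / 2) * Real.log (2 * Real.pi * t) - (Real.exp 1) ^ 2 / 4 - 1 / 2))
      Filter.atTop (nhds 0)) :
    Filter.Tendsto (fun n : ℕ =>
        Real.Gamma ((n : ℝ) + 1) /
          (Real.Gamma (j n + 1) ^ 2 * Real.Gamma ((n : ℝ) - j n + 1)))
      Filter.atTop (nhds t) := by
  exact stmt10_general ht tendsto_natCast_atTop_atTop hj

end
end

section
/- Fix q > 0, let Σ_n be a random permutation of [n] from the Mallows(q) distribution, let m ≥ 2 with n ≥ 2m, and let τ_m = 12⋯m be the increasing pattern. Let W be the number of blocks of m consecutive indices α = {i, …, i+m−1} ⊆ [n] on which the values of Σ_n are increasing, and let Y be a Poisson random variable with mean equal to E W. Then d_TV( L(W), L(Y) ) ≤ 2·(b_1 + b_2), where b_1 = n_1/I_m(q)², b_2 = n_2·Σ_{s=1}^{m−1} 1/I_{2m−s}(q), n_1 = 2mn − 3m² + m, and n_2 = 3m − 3m² − 2n + 2mn. -/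
open scoped Classical
open Filter

noncomputable section

/-!
The proof is the Stein–Chen method under local dependence. Let `X_α` be the indicator of an
increasing run on the block `α`, let `λ = E W`, and let `g` solve the Stein equation of `Po(λ)` for
the set on which `L(W)` exceeds `Po(λ)` the most. Then `d_TV(L(W), Po(λ))` is the sum over `α` of
`E X_α E g(W + 1) - E[X_α g(W)]`. If `X_α` is independent of the runs on the blocks disjoint from
`α`, then `|g(k + 1) - g(k)| ≤ (1 - exp(-λ)) / λ` bounds this term by the probabilities of runs on
`α` and on the blocks that meet it.

This independence comes from rearranging the values inside `α`: if `σ` is increasing on `α` and `ρ`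
permutes the positions in `α`, then `inv(σρ) = inv(σ) + inv(ρ)`, so the weight `q ^ inv` factors
over the order pattern on `α`, while what happens on disjoint blocks is unchanged. In particular a
run of length `m` at a given place has probability `1 / I_m(q)`. Two runs sharing `s ≥ 1` positions
form a single run of length `2m - s`, of probability `1 / I_{2m-s}(q)`.
-/

section TotalVariation

open MeasureTheory

variable {α : Type*} [MeasurableSpace α]

/-- The total variation distance of two probability measures on a countable type, as half the
`ℓ¹`-distance of their point masses. -/
def tvDist (μ ν : Measure α) : ℝ :=
  1 / 2 * ∑' a, |μ.real {a} - ν.real {a}|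

variable [Countable α] [MeasurableSingletonClass α]

lemma hasSum_indicator_measureReal_singleton (μ : Measure α) [IsFiniteMeasure μ] (A : Set α) :
    HasSum (A.indicator fun a => μ.real {a}) (μ.real A) := by
  have hA := μ.tsum_indicator_apply_singleton A A.to_countable.measurableSet
  have hsum := ENNReal.hasSum_toReal (hA.trans_ne (measure_ne_top μ A))
  convert hsum using 1
  · funext a
    by_cases ha : a ∈ A <;> simp [ha, measureReal_def]
  · rw [← ENNReal.tsum_toReal_eq, hA, measureReal_def]
    exact ENNReal.ne_top_of_tsum_ne_top (hA.trans_ne (measure_ne_top μ A))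

lemma exists_tvDist_eq_measureReal_sub (μ ν : Measure α) [IsProbabilityMeasure μ]
    [IsProbabilityMeasure ν] : ∃ A : Set α, tvDist μ ν = μ.real A - ν.real A := by
  let A : Set α := {a | ν.real {a} ≤ μ.real {a}}
  have hdiff (B : Set α) := (hasSum_indicator_measureReal_singleton μ B).sub
    (hasSum_indicator_measureReal_singleton ν B)
  have habs : HasSum (fun a => |μ.real {a} - ν.real {a}|) (2 * (μ.real A - ν.real A)) := by
    have htotal := ((hdiff A).mul_left 2).sub (hdiff Set.univ)
    simp only [probReal_univ, sub_self, sub_zero, Set.indicator_univ] at htotal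
    refine htotal.congr_fun fun a => ?_
    by_cases ha : a ∈ A
    · rw [Set.indicator_of_mem ha, Set.indicator_of_mem ha, abs_of_nonneg (sub_nonneg.2 ha)]
      ring
    · rw [Set.indicator_of_notMem ha, Set.indicator_of_notMem ha,
        abs_of_nonpos (sub_nonpos.2 (not_le.1 ha).le)]
      ring
  exact ⟨A, by rw [tvDist, habs.tsum_eq]; ring⟩

end TotalVariation

section PoissonStein

open MeasureTheory ProbabilityTheory
open scoped NNReal

lemma measureReal_inter_Iio_succ (μ : Measure ℕ) [IsFiniteMeasure μ] (A : Set ℕ) (k : ℕ) :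
    μ.real (A ∩ Set.Iio (k + 1)) = μ.real (A ∩ Set.Iio k) + μ.real (A ∩ {k}) := by
  rw [← measureReal_union _ (MeasurableSet.of_discrete), ← Set.inter_union_distrib_left]
  · congr 2
    ext j
    simp
  · exact (Set.disjoint_singleton_right.2 (Set.self_notMem_Iio)).mono inf_le_right inf_le_right

lemma succ_mul_poissonMeasure_real_singleton (r : ℝ≥0) (k : ℕ) :
    (k + 1 : ℝ) * (poissonMeasure r).real {k + 1} = r * (poissonMeasure r).real {k} := by
  simp only [poissonMeasure_real_singleton, Nat.factorial_succ]
  push_cast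
  field_simp
  ring

lemma hasSum_indicator_mul_poissonMeasure (r : ℝ≥0) (A : Set ℕ) :
    HasSum (A.indicator fun k => (k : ℝ) * (poissonMeasure r).real {k})
      (r * (poissonMeasure r).real (Nat.succ ⁻¹' A)) := by
  have hshift := (hasSum_indicator_measureReal_singleton (poissonMeasure r)
    (Nat.succ ⁻¹' A)).mul_left (r : ℝ)
  refine (hasSum_nat_add_iff' 1).1 ?_
  simp only [Finset.sum_range_one, Set.indicator_apply, CharP.cast_eq_zero, zero_mul, ite_self,
    sub_zero]
  refine hshift.congr_fun fun k => ?_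
  by_cases hk : k + 1 ∈ A <;> simp [hk, succ_mul_poissonMeasure_real_singleton]

lemma mul_poissonMeasure_real_Iio_le (r : ℝ≥0) (k : ℕ) :
    r * (poissonMeasure r).real (Set.Iio k) ≤ k * (poissonMeasure r).real (Set.Ioc 0 k) := by
  have hpre : Nat.succ ⁻¹' Set.Ioc 0 k = Set.Iio k := by ext j; simp
  rw [← hpre]
  refine hasSum_le (fun j => ?_) (hasSum_indicator_mul_poissonMeasure r (Set.Ioc 0 k))
    ((hasSum_indicator_measureReal_singleton (poissonMeasure r) (Set.Ioc 0 k)).mul_left (k : ℝ))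
  by_cases hj : j ∈ Set.Ioc 0 k
  · rw [Set.indicator_of_mem hj, Set.indicator_of_mem hj]
    gcongr
    exact hj.2
  · simp [hj]

lemma mul_poissonMeasure_real_Ioi_le (r : ℝ≥0) (k : ℕ) :
    k * (poissonMeasure r).real (Set.Ioi k) ≤ r * (poissonMeasure r).real (Set.Ici k) := by
  have hpre : Nat.succ ⁻¹' Set.Ioi k = Set.Ici k := by ext j; simp
  rw [← hpre]
  refine hasSum_le (fun j => ?_)
    ((hasSum_indicator_measureReal_singleton (poissonMeasure r) (Set.Ioi k)).mul_left (k : ℝ))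
    (hasSum_indicator_mul_poissonMeasure r (Set.Ioi k))
  by_cases hj : j ∈ Set.Ioi k
  · rw [Set.indicator_of_mem hj, Set.indicator_of_mem hj]
    gcongr
    exact (Set.mem_Ioi.1 hj).le
  · simp [hj]

/-- The solution `g` of the Stein equation `r g(k + 1) - k g(k) = 1_A(k) - Po(r)(A)`. Its value at
`0`, which the equation leaves free, is `0 / 0 = 0`. -/
def poissonSteinSolution (r : ℝ≥0) (A : Set ℕ) (k : ℕ) : ℝ :=
  ((poissonMeasure r).real (A ∩ Set.Iio k) -
    (poissonMeasure r).real A * (poissonMeasure r).real (Set.Iio k)) /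
      (k * (poissonMeasure r).real {k})

lemma mul_poissonSteinSolution {r : ℝ≥0} (hr : 0 < r) (A : Set ℕ) (k : ℕ) :
    k * poissonSteinSolution r A k = ((poissonMeasure r).real (A ∩ Set.Iio k) -
      (poissonMeasure r).real A * (poissonMeasure r).real (Set.Iio k)) /
        (poissonMeasure r).real {k} := by
  rcases Nat.eq_zero_or_pos k with rfl | hk
  · simp
  · have hpos := poissonMeasure_real_singleton_pos k hr
    rw [poissonSteinSolution]
    field_simp

theorem poissonSteinSolution_equation {r : ℝ≥0} (hr : 0 < r) (A : Set ℕ) (k : ℕ) :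
    r * poissonSteinSolution r A (k + 1) - k * poissonSteinSolution r A k =
      A.indicator 1 k - (poissonMeasure r).real A := by
  have hpos := poissonMeasure_real_singleton_pos k hr
  have hIio := measureReal_inter_Iio_succ (poissonMeasure r) Set.univ k
  simp only [Set.univ_inter] at hIio
  rw [mul_poissonSteinSolution hr, poissonSteinSolution, Nat.cast_add_one,
    succ_mul_poissonMeasure_real_singleton, measureReal_inter_Iio_succ, hIio]
  by_cases hk : k ∈ A
  · rw [Set.inter_singleton_of_mem hk, Set.indicator_of_mem hk, Pi.one_apply]
    field_simp
    ring
  · rw [Set.inter_singleton_of_notMem hk, Set.indicator_of_notMem hk, measureReal_empty]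
    field_simp
    ring

lemma measureReal_inter_Iio_add_singleton_add_Ioi (μ : Measure ℕ) [IsFiniteMeasure μ] (A : Set ℕ)
    (k : ℕ) : μ.real (A ∩ Set.Iio k) + μ.real (A ∩ {k}) + μ.real (A ∩ Set.Ioi k) = μ.real A := by
  have hcompl : A ∩ Set.Ioi k = A \ Set.Iio (k + 1) := by
    ext j
    simp
  rw [← measureReal_inter_Iio_succ, hcompl, measureReal_inter_add_sdiff MeasurableSet.of_discrete]

lemma measureReal_Ici_eq_singleton_add_Ioi (μ : Measure ℕ) [IsFiniteMeasure μ] (k : ℕ) :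
    μ.real (Set.Ici k) = μ.real {k} + μ.real (Set.Ioi k) := by
  rw [← measureReal_union (by simp) measurableSet_Ioi, Set.singleton_union, Set.Ioi_insert]

lemma measureReal_Iic_eq_Iio_add_singleton (μ : Measure ℕ) [IsFiniteMeasure μ] (k : ℕ) :
    μ.real (Set.Iic k) = μ.real (Set.Iio k) + μ.real {k} := by
  rw [← measureReal_union (by simp) (.singleton k), Set.union_singleton, Set.Iio_insert]

lemma poissonSteinSolution_succ_sub {r : ℝ≥0} (hr : 0 < r) (A : Set ℕ) {k : ℕ} (hk : 0 < k)
    {P : Set ℕ → ℝ} (hP : P = (poissonMeasure r).real) :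
    poissonSteinSolution r A (k + 1) - poissonSteinSolution r A k =
      P (A ∩ {k}) / P {k} * (P (Set.Ioi k) / r + P (Set.Iio k) / k) -
        (P (A ∩ Set.Iio k) * (P (Set.Ici k) / (k * P {k}) - P (Set.Ioi k) / (r * P {k})) +
          P (A ∩ Set.Ioi k) * (P (Set.Iic k) / (r * P {k}) - P (Set.Iio k) / (k * P {k}))) := by
  subst hP
  have hpos := poissonMeasure_real_singleton_pos k hr
  have htotal := probReal_add_probReal_compl (μ := poissonMeasure r) (measurableSet_Iio (a := k))
  rw [Set.compl_Iio, measureReal_Ici_eq_singleton_add_Ioi] at htotal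
  rw [poissonSteinSolution, poissonSteinSolution, Nat.cast_add_one,
    succ_mul_poissonMeasure_real_singleton, Set.Iio_add_one_eq_Iic,
    ← Set.Iio_add_one_eq_Iic k, measureReal_inter_Iio_succ, Set.Iio_add_one_eq_Iic,
    measureReal_Iic_eq_Iio_add_singleton, measureReal_Ici_eq_singleton_add_Ioi,
    ← measureReal_inter_Iio_add_singleton_add_Ioi _ A k,
    show (poissonMeasure r).real (Set.Ioi k) =
      1 - (poissonMeasure r).real (Set.Iio k) - (poissonMeasure r).real {k} by linarith]
  field_simp
  ring

lemma abs_poissonSteinSolution_succ_sub_le {r : ℝ≥0} (hr : 0 < r) (A : Set ℕ) {k : ℕ}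
    (hk : 0 < k) :
    |poissonSteinSolution r A (k + 1) - poissonSteinSolution r A k| ≤
      (poissonMeasure r).real (Set.Ioi k) / r + (poissonMeasure r).real (Set.Iio k) / k := by
  have hr' : (0 : ℝ) < r := hr
  have hk' : (0 : ℝ) < k := Nat.cast_pos.2 hk
  generalize hP : (poissonMeasure r).real = P
  have hmono {S T : Set ℕ} (h : S ⊆ T) : P S ≤ P T := hP ▸ measureReal_mono h
  have hnonneg (S : Set ℕ) : 0 ≤ P S := hP ▸ measureReal_nonneg
  have hpos : 0 < P {k} := hP ▸ poissonMeasure_real_singleton_pos k hr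
  have hIoi : 0 ≤ P (Set.Ici k) / (k * P {k}) - P (Set.Ioi k) / (r * P {k}) := by
    have hstep : k * P (Set.Ioi k) ≤ r * P (Set.Ici k) := hP ▸ mul_poissonMeasure_real_Ioi_le r k
    rw [sub_nonneg, ← div_div, ← div_div]
    exact div_le_div_of_nonneg_right ((div_le_div_iff₀ hr' hk').2 (by linarith)) hpos.le
  have hIio : 0 ≤ P (Set.Iic k) / (r * P {k}) - P (Set.Iio k) / (k * P {k}) := by
    have hstep : r * P (Set.Iio k) ≤ k * P (Set.Iic k) :=
      (hP ▸ mul_poissonMeasure_real_Iio_le r k).trans <|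
        mul_le_mul_of_nonneg_left (hmono Set.Ioc_subset_Iic_self) hk'.le
    rw [sub_nonneg, ← div_div, ← div_div]
    exact div_le_div_of_nonneg_right ((div_le_div_iff₀ hk' hr').2 (by linarith)) hpos.le
  have hweights : P (Set.Iio k) * (P (Set.Ici k) / (k * P {k}) - P (Set.Ioi k) / (r * P {k})) +
      P (Set.Ioi k) * (P (Set.Iic k) / (r * P {k}) - P (Set.Iio k) / (k * P {k})) =
      P (Set.Ioi k) / r + P (Set.Iio k) / k := by
    rw [← hP, measureReal_Ici_eq_singleton_add_Ioi, measureReal_Iic_eq_Iio_add_singleton, hP]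
    field_simp
    ring
  rw [poissonSteinSolution_succ_sub hr A hk hP.symm]
  have hbound : 0 ≤ P (Set.Ioi k) / r + P (Set.Iio k) / k :=
    add_nonneg (div_nonneg (hnonneg _) hr'.le) (div_nonneg (hnonneg _) hk'.le)
  refine abs_sub_le_of_nonneg_of_le ?_ ?_ ?_ ?_
  · exact mul_nonneg (div_nonneg (hnonneg _) hpos.le) hbound
  · exact mul_le_of_le_one_left hbound
      ((div_le_one hpos).2 (hmono Set.inter_subset_right))
  · exact add_nonneg (mul_nonneg (hnonneg _) hIoi) (mul_nonneg (hnonneg _) hIio)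
  · rw [← hweights]
    gcongr <;> exact hmono Set.inter_subset_right

lemma abs_poissonSteinSolution_succ_sub_le_div {r : ℝ≥0} (hr : 0 < r) (A : Set ℕ) {k : ℕ}
    (hk : 0 < k) :
    |poissonSteinSolution r A (k + 1) - poissonSteinSolution r A k| ≤
      (1 - Real.exp (-r)) / r := by
  have hr' : (0 : ℝ) < r := hr
  have hstep := mul_poissonMeasure_real_Iio_le r k
  have hpositive : (poissonMeasure r).real (Set.Ioi k) + (poissonMeasure r).real (Set.Ioc 0 k) =
      1 - Real.exp (-r) := by
    have hzero : (Set.Ioi 0 : Set ℕ) = {0}ᶜ := by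
      ext j
      simp [Nat.pos_iff_ne_zero]
    rw [← measureReal_union Set.Ioc_disjoint_Ioi_same.symm measurableSet_Ioc, Set.union_comm,
      Set.Ioc_union_Ioi_eq_Ioi k.zero_le, hzero, probReal_compl_eq_one_sub (.singleton 0),
      poissonMeasure_real_singleton]
    simp
  refine (abs_poissonSteinSolution_succ_sub_le hr A hk).trans ?_
  rw [← hpositive, add_div]
  exact add_le_add_right ((div_le_div_iff₀ (Nat.cast_pos.2 hk) hr').2 (by linarith)) _

lemma abs_poissonSteinSolution_sub_le {r : ℝ≥0} (hr : 0 < r) (A : Set ℕ) {k : ℕ} (hk : 0 < k)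
    (d : ℕ) :
    |poissonSteinSolution r A (k + d) - poissonSteinSolution r A k| ≤
      (1 - Real.exp (-r)) / r * d := by
  rw [abs_sub_comm, ← Real.dist_eq]
  refine (dist_le_range_sum_of_dist_le (f := fun j => poissonSteinSolution r A (k + j)) d
    (d := fun _ => (1 - Real.exp (-r)) / r) fun {j} _ => ?_).trans_eq ?_
  · rw [dist_comm, Real.dist_eq]
    exact abs_poissonSteinSolution_succ_sub_le_div hr A (Nat.add_pos_left hk j)
  · rw [Finset.sum_const, Finset.card_range, nsmul_eq_mul, mul_comm]

end PoissonStein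

section SteinChen

open MeasureTheory ProbabilityTheory
open scoped NNReal

variable {Ω ι : Type*} {mΩ : MeasurableSpace Ω} {μ : Measure Ω}

lemma setIntegral_comp_of_indepSet {A : Set Ω} {V : Ω → ℕ}
    (hV : Measurable V) (hindep : ∀ T, IndepSet A (V ⁻¹' T) μ) (f : ℕ → ℝ) :
    ∫ ω in A, f (V ω) ∂μ = μ.real A * ∫ ω, f (V ω) ∂μ := by
  have hmap : (μ.restrict A).map V = μ A • μ.map V := by
    ext T hT
    rw [Measure.map_apply hV hT, Measure.restrict_apply (hV hT), Set.inter_comm,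
      (hindep T).measure_inter_eq_mul, Measure.smul_apply, Measure.map_apply hV hT, smul_eq_mul]
  rw [← integral_map hV.aemeasurable .of_discrete, ← integral_map hV.aemeasurable .of_discrete,
    hmap, integral_smul_measure, measureReal_def, smul_eq_mul]

/-- The number of the events `A i`, `i ∈ s`, that occur. -/
def eventCount (s : Finset ι) (A : ι → Set Ω) (ω : Ω) : ℕ :=
  (s.filter fun i => ω ∈ A i).card

lemma eventCount_eq_sum_indicator (s : Finset ι) (A : ι → Set Ω) (ω : Ω) :
    eventCount s A ω = ∑ i ∈ s, (A i).indicator 1 ω := by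
  simp only [eventCount, Finset.card_filter, Set.indicator_apply, Pi.one_apply]

lemma cast_eventCount (s : Finset ι) (A : ι → Set Ω) (ω : Ω) :
    (eventCount s A ω : ℝ) = ∑ i ∈ s, (A i).indicator 1 ω := by
  simp only [eventCount, Finset.natCast_card_filter, Set.indicator_apply, Pi.one_apply]

lemma eventCount_sdiff_add [DecidableEq ι] {s t : Finset ι} (ht : t ⊆ s) (A : ι → Set Ω) (ω : Ω) :
    eventCount (s \ t) A ω + eventCount t A ω = eventCount s A ω := by
  simp only [eventCount_eq_sum_indicator, Finset.sum_sdiff ht]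

lemma eventCount_erase_add_one [DecidableEq ι] {s : Finset ι} {i : ι} (hi : i ∈ s)
    {A : ι → Set Ω} {ω : Ω} (hω : ω ∈ A i) :
    eventCount (s.erase i) A ω + 1 = eventCount s A ω := by
  rw [eventCount_eq_sum_indicator, eventCount_eq_sum_indicator, ← Finset.sum_erase_add s _ hi,
    Set.indicator_of_mem hω, Pi.one_apply]

variable {s : Finset ι} {A : ι → Set Ω}

lemma measurable_eventCount (hA : ∀ i ∈ s, MeasurableSet (A i)) : Measurable (eventCount s A) := by
  simp only [funext (eventCount_eq_sum_indicator s A)]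
  exact Finset.measurable_fun_sum s fun i hi => measurable_one.indicator (hA i hi)

lemma integrable_comp_eventCount [IsFiniteMeasure μ] (hA : ∀ i ∈ s, MeasurableSet (A i))
    (f : ℕ → ℝ) : Integrable (fun ω => f (eventCount s A ω)) μ := by
  refine Integrable.of_bound
    (Measurable.of_discrete.comp (measurable_eventCount hA)).aestronglyMeasurable
    (∑ k ∈ Finset.range (s.card + 1), |f k|) (ae_of_all μ fun ω => ?_)
  have hle : eventCount s A ω ≤ s.card := Finset.card_filter_le _ _
  exact Finset.single_le_sum (f := fun k => |f k|) (fun k _ => abs_nonneg _)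
    (Finset.mem_range.2 (Nat.lt_succ_of_le hle))

lemma integral_cast_eventCount [IsFiniteMeasure μ] (hA : ∀ i ∈ s, MeasurableSet (A i)) :
    ∫ ω, (eventCount s A ω : ℝ) ∂μ = ∑ i ∈ s, μ.real (A i) := by
  simp only [cast_eventCount]
  rw [integral_finsetSum s fun i hi =>
    Integrable.indicator (f := 1) (integrable_const (1 : ℝ)) (hA i hi)]
  exact Finset.sum_congr rfl fun i hi => integral_indicator_one (hA i hi)

lemma setIntegral_cast_eventCount [IsFiniteMeasure μ] (hA : ∀ i ∈ s, MeasurableSet (A i))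
    (E : Set Ω) : ∫ ω in E, (eventCount s A ω : ℝ) ∂μ = ∑ i ∈ s, μ.real (E ∩ A i) := by
  rw [integral_cast_eventCount hA]
  exact Finset.sum_congr rfl fun i hi => by
    rw [measureReal_restrict_apply (hA i hi), Set.inter_comm]

lemma integral_eventCount_mul [IsFiniteMeasure μ] (hA : ∀ i ∈ s, MeasurableSet (A i))
    (f : ℕ → ℝ) :
    ∫ ω, eventCount s A ω * f (eventCount s A ω) ∂μ =
      ∑ i ∈ s, ∫ ω in A i, f (eventCount s A ω) ∂μ := by
  have hf := integrable_comp_eventCount (μ := μ) hA f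
  calc ∫ ω, eventCount s A ω * f (eventCount s A ω) ∂μ
      = ∫ ω, ∑ i ∈ s, (A i).indicator (fun ω => f (eventCount s A ω)) ω ∂μ := by
        refine integral_congr_ae (ae_of_all μ fun ω => ?_)
        simp only [cast_eventCount, Finset.sum_mul, Set.indicator_apply, Pi.one_apply, ite_mul,
          one_mul, zero_mul]
    _ = ∑ i ∈ s, ∫ ω in A i, f (eventCount s A ω) ∂μ := by
        rw [integral_finsetSum s fun i hi => hf.indicator (hA i hi)]
        exact Finset.sum_congr rfl fun i hi => integral_indicator (hA i hi)

variable [DecidableEq ι] [IsProbabilityMeasure μ]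

lemma abs_mul_integral_sub_setIntegral_le {t : Finset ι} {i : ι} (hit : i ∈ t) (hts : t ⊆ s)
    (hA : ∀ j ∈ s, MeasurableSet (A j))
    (hindep : ∀ T, IndepSet (A i) (eventCount (s \ t) A ⁻¹' T) μ) {f : ℕ → ℝ} {L : ℝ}
    (hf : ∀ k > 0, ∀ d : ℕ, |f (k + d) - f k| ≤ L * d) :
    |μ.real (A i) * ∫ ω, f (eventCount s A ω + 1) ∂μ - ∫ ω in A i, f (eventCount s A ω) ∂μ| ≤
      L * (∑ j ∈ t, μ.real (A i) * μ.real (A j) + ∑ j ∈ t.erase i, μ.real (A i ∩ A j)) := by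
  have hAt : ∀ j ∈ t, MeasurableSet (A j) := fun j hj => hA j (hts hj)
  have hAt' : ∀ j ∈ t.erase i, MeasurableSet (A j) := fun j hj => hAt j (Finset.mem_of_mem_erase hj)
  have hAst : ∀ j ∈ s \ t, MeasurableSet (A j) := fun j hj => hA j (Finset.sdiff_subset hj)
  have hsplit := eventCount_sdiff_add hts A
  have hfar := setIntegral_comp_of_indepSet (measurable_eventCount hAst) hindep
    fun k => f (k + 1)
  have hglobal : |∫ ω, f (eventCount s A ω + 1) - f (eventCount (s \ t) A ω + 1) ∂μ| ≤
      L * ∑ j ∈ t, μ.real (A j) := by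
    rw [← integral_cast_eventCount hAt, ← integral_const_mul, ← Real.norm_eq_abs]
    refine norm_integral_le_of_norm_le ((integrable_comp_eventCount hAt _).const_mul L)
      (ae_of_all μ fun ω => ?_)
    rw [← hsplit ω, add_right_comm]
    exact hf _ (Nat.succ_pos _) _
  have hlocal : |∫ ω in A i, f (eventCount s A ω) - f (eventCount (s \ t) A ω + 1) ∂μ| ≤
      L * ∑ j ∈ t.erase i, μ.real (A i ∩ A j) := by
    rw [← setIntegral_cast_eventCount hAt', ← integral_const_mul, ← Real.norm_eq_abs]
    refine norm_integral_le_of_norm_le ((integrable_comp_eventCount hAt' _).const_mul L)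
      (ae_restrict_of_forall_mem (hAt i hit) fun ω hω => ?_)
    rw [← hsplit ω, ← eventCount_erase_add_one hit hω, add_comm _ 1, ← add_assoc]
    exact hf _ (Nat.succ_pos _) _
  rw [integral_sub (integrable_comp_eventCount hA fun k => f (k + 1))
    (integrable_comp_eventCount hAst fun k => f (k + 1))] at hglobal
  rw [integral_sub (integrable_comp_eventCount hA f)
    (integrable_comp_eventCount hAst fun k => f (k + 1)), hfar] at hlocal
  rw [← Finset.mul_sum, abs_le]
  rw [abs_le] at hglobal hlocal
  have hp : 0 ≤ μ.real (A i) := measureReal_nonneg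
  constructor <;> nlinarith

/-- The case `b₃ = 0` of the Arratia–Goldstein–Gordon theorem. -/
theorem tvDist_map_eventCount_poissonMeasure_le (B : ι → Finset ι) (hmem : ∀ i ∈ s, i ∈ B i)
    (hsub : ∀ i ∈ s, B i ⊆ s) (hA : ∀ i ∈ s, MeasurableSet (A i))
    (hindep : ∀ i ∈ s, ∀ T, IndepSet (A i) (eventCount (s \ B i) A ⁻¹' T) μ) {r : ℝ≥0} (hr : 0 < r)
    (hmean : (r : ℝ) = ∑ i ∈ s, μ.real (A i)) :
    tvDist (μ.map (eventCount s A)) (poissonMeasure r) ≤ (1 - Real.exp (-r)) / r *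
      ∑ i ∈ s, (∑ j ∈ B i, μ.real (A i) * μ.real (A j) +
        ∑ j ∈ (B i).erase i, μ.real (A i ∩ A j)) := by
  have hmeas := measurable_eventCount hA
  have := Measure.isProbabilityMeasure_map (μ := μ) hmeas.aemeasurable
  obtain ⟨T, hT⟩ := exists_tvDist_eq_measureReal_sub (μ.map (eventCount s A)) (poissonMeasure r)
  let g := poissonSteinSolution r T
  have hstein : tvDist (μ.map (eventCount s A)) (poissonMeasure r) =
      ∑ i ∈ s, (μ.real (A i) * ∫ ω, g (eventCount s A ω + 1) ∂μ -
        ∫ ω in A i, g (eventCount s A ω) ∂μ) := by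
    calc tvDist (μ.map (eventCount s A)) (poissonMeasure r)
        = ∫ ω, T.indicator 1 (eventCount s A ω) - (poissonMeasure r).real T ∂μ := by
          rw [hT, integral_sub (integrable_comp_eventCount hA _) (integrable_const _),
            integral_const, probReal_univ, one_smul, map_measureReal_apply hmeas .of_discrete,
            ← integral_indicator_one (hmeas .of_discrete)]
          rfl
      _ = ∫ ω, r * g (eventCount s A ω + 1) - eventCount s A ω * g (eventCount s A ω) ∂μ := by
          simp only [g, poissonSteinSolution_equation hr]
      _ = r * ∫ ω, g (eventCount s A ω + 1) ∂μ - ∑ i ∈ s, ∫ ω in A i, g (eventCount s A ω) ∂μ := by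
          rw [integral_sub (integrable_comp_eventCount hA fun k => r * g (k + 1))
            (integrable_comp_eventCount hA fun k => k * g k), integral_const_mul,
            integral_eventCount_mul hA]
      _ = _ := by rw [hmean, Finset.sum_mul, Finset.sum_sub_distrib]
  rw [hstein, Finset.mul_sum]
  refine Finset.sum_le_sum fun i hi => (le_abs_self _).trans ?_
  exact abs_mul_integral_sub_setIntegral_le (hmem i hi) (hsub i hi) hA (hindep i hi)
    fun k hk d => abs_poissonSteinSolution_sub_le hr T hk d

end SteinChen

section Inversions

open Equiv

variable {m n : ℕ}

lemma lt_iff_lt_of_ordConnected {α : Type*} [LinearOrder α] {s : Set α} (hs : s.OrdConnected)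
    {a b c : α} (ha : a ∈ s) (hb : b ∈ s) (hc : c ∉ s) : a < c ↔ b < c := by
  constructor <;> intro h <;> by_contra! hle
  · exact hc (hs.out ha hb ⟨h.le, hle⟩)
  · exact hc (hs.out hb ha ⟨h.le, hle⟩)

lemma viaEmbedding_mem_range_iff {α β : Type*} (f : α ↪ β) (ρ : Perm α) (b : β) :
    ρ.viaEmbedding f b ∈ Set.range f ↔ b ∈ Set.range f := by
  constructor <;> intro h
  · by_contra hb
    exact hb (ρ.viaEmbedding_apply_of_notMem f b hb ▸ h)
  · obtain ⟨a, rfl⟩ := h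
    exact ⟨ρ a, (ρ.viaEmbedding_apply f a).symm⟩

lemma viaEmbedding_lt_viaEmbedding_iff {α β : Type*} [LinearOrder β] {f : α ↪ β}
    (hf : (Set.range f).OrdConnected) (ρ : Perm α) {a b : β}
    (hab : ¬(a ∈ Set.range f ∧ b ∈ Set.range f)) :
    ρ.viaEmbedding f a < ρ.viaEmbedding f b ↔ a < b := by
  have hout {c : β} (hc : c ∉ Set.range f) : ρ.viaEmbedding f c = c :=
    ρ.viaEmbedding_apply_of_notMem f c hc
  have hmem (c : β) := viaEmbedding_mem_range_iff f ρ c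
  by_cases ha : a ∈ Set.range f <;> by_cases hb : b ∈ Set.range f
  · exact absurd ⟨ha, hb⟩ hab
  · rw [hout hb]
    exact lt_iff_lt_of_ordConnected hf ((hmem a).2 ha) ha hb
  · rw [hout ha]
    exact lt_iff_lt_of_ordConnected hf.dual ((hmem b).2 hb) hb ha
  · rw [hout ha, hout hb]

/-- The set of inversions of `σ`, as pairs of positions. -/
def inversions (σ : Perm (Fin n)) : Finset (Fin n × Fin n) :=
  Finset.univ.filter fun p => p.1 < p.2 ∧ σ p.2 < σ p.1

lemma mem_inversions {σ : Perm (Fin n)} {p : Fin n × Fin n} :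
    p ∈ inversions σ ↔ p.1 < p.2 ∧ σ p.2 < σ p.1 := by
  simp only [inversions, Finset.mem_filter_univ]

lemma card_inversions (σ : Perm (Fin n)) : (inversions σ).card = invCount σ := rfl

lemma card_filter_inversions_mul_viaEmbedding (f : Fin m ↪o Fin n)
    (hf : (Set.range f).OrdConnected) (σ : Perm (Fin n)) (ρ : Perm (Fin m)) :
    ((inversions (σ * ρ.viaEmbedding f.toEmbedding)).filter
        fun p => ¬(p.1 ∈ Set.range f ∧ p.2 ∈ Set.range f)).card =
      ((inversions σ).filter fun p => ¬(p.1 ∈ Set.range f ∧ p.2 ∈ Set.range f)).card := by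
  let π := ρ.viaEmbedding f.toEmbedding
  have hmem (b : Fin n) : π b ∈ Set.range f ↔ b ∈ Set.range f :=
    viaEmbedding_mem_range_iff f.toEmbedding ρ b
  refine Finset.card_equiv (π.prodCongr π) fun p => ?_
  simp only [Finset.mem_filter, mem_inversions, prodCongr_apply, Prod.map_fst, Prod.map_snd, hmem]
  refine and_congr_left fun hp => and_congr_left fun _ => ?_
  exact (viaEmbedding_lt_viaEmbedding_iff (f := f.toEmbedding) hf ρ hp).symm

lemma card_filter_inversions_mem_range (f : Fin m ↪o Fin n) (σ : Perm (Fin n)) :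
    ((inversions σ).filter fun p => p.1 ∈ Set.range f ∧ p.2 ∈ Set.range f).card =
      (Finset.univ.filter fun p : Fin m × Fin m => p.1 < p.2 ∧ σ (f p.2) < σ (f p.1)).card := by
  rw [← Finset.card_map (f.toEmbedding.prodMap f.toEmbedding)]
  congr 1
  ext ⟨a, b⟩
  simp only [Finset.mem_filter, mem_inversions, Finset.mem_map, Finset.mem_univ, true_and]
  constructor
  · rintro ⟨⟨hlt, hinv⟩, ⟨k, rfl⟩, ⟨l, rfl⟩⟩
    exact ⟨(k, l), ⟨f.lt_iff_lt.1 hlt, hinv⟩, rfl⟩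
  · rintro ⟨⟨k, l⟩, ⟨hlt, hinv⟩, ⟨⟩⟩
    exact ⟨⟨f.lt_iff_lt.2 hlt, hinv⟩, ⟨k, rfl⟩, ⟨l, rfl⟩⟩

theorem invCount_mul_viaEmbedding (f : Fin m ↪o Fin n) (hf : (Set.range f).OrdConnected)
    {σ : Perm (Fin n)} (hσ : StrictMono (σ ∘ f)) (ρ : Perm (Fin m)) :
    invCount (σ * ρ.viaEmbedding f.toEmbedding) = invCount σ + invCount ρ := by
  have hvia (k : Fin m) : (σ * ρ.viaEmbedding f.toEmbedding) (f k) = σ (f (ρ k)) :=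
    congrArg σ (ρ.viaEmbedding_apply f.toEmbedding k)
  have hinside : ((inversions (σ * ρ.viaEmbedding f.toEmbedding)).filter
      fun p => p.1 ∈ Set.range f ∧ p.2 ∈ Set.range f).card = invCount ρ := by
    have hlt {k l : Fin m} : σ (f k) < σ (f l) ↔ k < l := hσ.lt_iff_lt
    simp only [card_filter_inversions_mem_range, hvia, hlt, invCount]
  have hnone : ((inversions σ).filter fun p => p.1 ∈ Set.range f ∧ p.2 ∈ Set.range f).card = 0 := by
    rw [card_filter_inversions_mem_range, Finset.card_eq_zero, Finset.filter_eq_empty_iff]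
    rintro ⟨k, l⟩ - ⟨hlt, hinv⟩
    exact hinv.not_gt (hσ hlt)
  rw [← card_inversions, ← card_inversions σ, ← Finset.card_filter_add_card_filter_not
    (fun p => p.1 ∈ Set.range f ∧ p.2 ∈ Set.range f), hinside,
    card_filter_inversions_mul_viaEmbedding f hf,
    ← Finset.card_filter_add_card_filter_not (s := inversions σ)
    (fun p => p.1 ∈ Set.range f ∧ p.2 ∈ Set.range f), hnone, zero_add, add_comm]

lemma existsUnique_strictMono_comp_symm {α : Type*} [LinearOrder α] {f : Fin m → α}
    (hf : Function.Injective f) : ∃! ρ : Perm (Fin m), StrictMono (f ∘ ρ.symm) := by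
  have hsort := Tuple.monotone_sort f
  refine ⟨(Tuple.sort f).symm, ?_, fun ρ hρ => symm_bijective.injective ?_⟩
  · exact hsort.strictMono_of_injective (hf.comp (Tuple.sort f).injective)
  · exact DFunLike.coe_injective (hf.comp_left (Tuple.unique_monotone hρ.monotone hsort))

theorem sum_pow_invCount_eq_mul_sum_strictMono (q : ℝ) (f : Fin m ↪o Fin n)
    (hf : (Set.range f).OrdConnected) {E : Set (Perm (Fin n))}
    (hE : ∀ (ρ : Perm (Fin m)) (σ : Perm (Fin n)),
      σ * ρ.viaEmbedding f.toEmbedding ∈ E ↔ σ ∈ E) :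
    ∑ σ with σ ∈ E, q ^ invCount σ =
      (∑ ρ : Perm (Fin m), q ^ invCount ρ) *
        ∑ σ with σ ∈ E ∧ StrictMono (σ ∘ f), q ^ invCount σ := by
  have hcard (σ : Perm (Fin n)) :
      (Finset.univ.filter fun ρ : Perm (Fin m) => StrictMono ((σ ∘ f) ∘ ρ.symm)).card = 1 :=
    (Fintype.existsUnique_iff_card_one _).1
      (existsUnique_strictMono_comp_symm (σ.injective.comp f.injective))
  calc ∑ σ with σ ∈ E, q ^ invCount σ
      = ∑ σ with σ ∈ E, ∑ ρ : Perm (Fin m) with StrictMono ((σ ∘ f) ∘ ρ.symm),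
          q ^ invCount σ := by
        simp only [Finset.sum_const, hcard, one_smul]
    _ = ∑ ρ : Perm (Fin m), ∑ σ with σ ∈ E ∧ StrictMono ((σ ∘ f) ∘ ρ.symm),
          q ^ invCount σ :=
        Finset.sum_comm' fun σ ρ => by simp
    _ = ∑ ρ : Perm (Fin m), ∑ σ with σ ∈ E ∧ StrictMono (σ ∘ f),
          q ^ invCount ρ * q ^ invCount σ := by
        refine Finset.sum_congr rfl fun ρ _ => (Finset.sum_equiv
          (Equiv.mulRight (ρ.viaEmbedding f.toEmbedding)) (fun σ => ?_) fun σ hσ => ?_).symm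
        · have hvia : (⇑(σ * ρ.viaEmbedding f.toEmbedding) ∘ f) ∘ ρ.symm = σ ∘ f := by
            funext k
            have hk := ρ.viaEmbedding_apply f.toEmbedding (ρ.symm k)
            rw [apply_symm_apply] at hk
            exact congrArg σ hk
          rw [Finset.mem_filter_univ, Finset.mem_filter_univ, coe_mulRight, hE, hvia]
        · rw [coe_mulRight, invCount_mul_viaEmbedding f hf (Finset.mem_filter.1 hσ).2.2, pow_add,
            mul_comm]
    _ = _ := by rw [Finset.sum_mul_sum]

lemma invCount_cycleRange_symm (k : Fin (n + 1)) : invCount k.cycleRange.symm = k := by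
  have hval (j : Fin n) : k.succAbove j < k ↔ (j : ℕ) < k := Fin.succAbove_lt_iff_castSucc_lt k j
  have hpairs : inversions k.cycleRange.symm =
      {0} ×ˢ (Finset.univ.filter fun j : Fin n => (j : ℕ) < k).map (Fin.succEmb n) := by
    ext ⟨a, b⟩
    cases a using Fin.cases <;> cases b using Fin.cases <;>
      simp +contextual [mem_inversions, Fin.cycleRange_symm_zero, Fin.cycleRange_symm_succ, hval,
        (Fin.succ_ne_zero _).symm, le_of_lt]
  rw [← card_inversions, hpairs, Finset.card_product, Finset.card_map, Fin.card_filter_val_lt]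
  simp [k.is_le]

lemma strictMono_comp_succ_iff {σ : Perm (Fin (n + 1))} :
    StrictMono (σ ∘ Fin.succ) ↔ ∃ k : Fin (n + 1), k.cycleRange.symm = σ := by
  constructor
  · intro h
    have hsucc : σ ∘ Fin.succ = (σ 0).succAbove := by
      rw [← h.range_inj (Fin.strictMono_succAbove _), Set.range_comp, Fin.range_succ,
        Fin.range_succAbove, Set.image_compl_eq σ.bijective, Set.image_singleton]
    refine ⟨σ 0, Equiv.ext fun k => ?_⟩
    cases k using Fin.cases with
    | zero => rw [Fin.cycleRange_symm_zero]
    | succ k => rw [Fin.cycleRange_symm_succ, ← hsucc, Function.comp_apply]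
  · rintro ⟨k, rfl⟩ i j hij
    simpa only [Function.comp_apply, Fin.cycleRange_symm_succ] using
      Fin.strictMono_succAbove k hij

lemma sum_strictMono_comp_succ_pow_invCount (n : ℕ) (q : ℝ) :
    ∑ σ ∈ Finset.univ.filter fun σ : Perm (Fin (n + 1)) => StrictMono (σ ∘ Fin.succ),
      q ^ invCount σ = ∑ i ∈ Finset.range (n + 1), q ^ i := by
  have himage : (Finset.univ.filter fun σ : Perm (Fin (n + 1)) => StrictMono (σ ∘ Fin.succ)) =
      Finset.univ.image fun k : Fin (n + 1) => k.cycleRange.symm := by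
    ext σ
    simp [strictMono_comp_succ_iff]
  have hinj : Function.Injective fun k : Fin (n + 1) => k.cycleRange.symm := fun k l h => by
    simpa only [Fin.cycleRange_symm_zero] using DFunLike.congr_fun h 0
  rw [himage, Finset.sum_image hinj.injOn]
  simp only [invCount_cycleRange_symm, Fin.sum_univ_eq_sum_range (q ^ ·)]

theorem sum_pow_invCount (n : ℕ) (q : ℝ) :
    ∑ σ : Perm (Fin n), q ^ invCount σ = invPoly n q := by
  induction n with
  | zero => simp [invPoly, invCount]
  | succ n ih =>
    have hrange : (Set.range (Fin.succOrderEmb n)).OrdConnected := by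
      rw [Fin.coe_succOrderEmb, Fin.range_succ]
      exact ⟨fun a ha b _ c hc => (Fin.pos_of_ne_zero ha).trans_le hc.1 |>.ne'⟩
    have hsplit := sum_pow_invCount_eq_mul_sum_strictMono q (Fin.succOrderEmb n) hrange
      (E := Set.univ) (by simp)
    simp only [Set.mem_univ, true_and, Finset.filter_true, Fin.coe_succOrderEmb] at hsplit
    rw [hsplit, ih, sum_strictMono_comp_succ_pow_invCount, invPoly, invPoly,
      Finset.prod_range_succ]

end Inversions

section IncreasingRuns

open Equiv

variable {m n i j : ℕ}

/-- The increasing embedding of `Fin m` onto the block of `m` consecutive positions from `i` on. -/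
def blockEmb (h : i + m ≤ n) : Fin m ↪o Fin n :=
  (Fin.natAddOrderEmb i).trans (Fin.castLEOrderEmb h)

lemma mem_range_blockEmb {h : i + m ≤ n} {a : Fin n} :
    a ∈ Set.range (blockEmb h) ↔ i ≤ a ∧ a < i + m := by
  constructor
  · rintro ⟨k, rfl⟩
    exact ⟨Nat.le_add_right i k, Nat.add_lt_add_left k.isLt i⟩
  · rintro ⟨hia, ham⟩
    exact ⟨⟨a - i, by omega⟩, Fin.ext (Nat.add_sub_of_le hia)⟩

lemma ordConnected_range_blockEmb (h : i + m ≤ n) : (Set.range (blockEmb h)).OrdConnected :=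
  ⟨fun _ ha _ hb _ hc => mem_range_blockEmb.2 ⟨(mem_range_blockEmb.1 ha).1.trans hc.1,
    lt_of_le_of_lt hc.2 (mem_range_blockEmb.1 hb).2⟩⟩

/-- The event that a permutation of `Fin n` is increasing on the `m` positions from `i` on. -/
def increasingRunAt (n m i : ℕ) : Set (Perm (Fin n)) :=
  {σ | OccursConsec (Equiv.refl (Fin m)) σ i}

lemma mem_increasingRunAt_iff_strictMono {σ : Perm (Fin n)} (h : i + m ≤ n) :
    σ ∈ increasingRunAt n m i ↔ StrictMono (σ ∘ blockEmb h) :=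
  ⟨fun hσ _ _ hkl => (hσ.2 _ _).2 hkl, fun hσ => ⟨h, fun _ _ => hσ.lt_iff_lt⟩⟩

lemma mem_increasingRunAt_iff_strictMonoOn {σ : Perm (Fin n)} (h : i + m ≤ n) :
    σ ∈ increasingRunAt n m i ↔ StrictMonoOn σ {a | i ≤ a ∧ a < i + m} := by
  have hrange : {a : Fin n | i ≤ a ∧ a < i + m} = Set.range (blockEmb h) :=
    Set.ext fun _ => mem_range_blockEmb.symm
  rw [mem_increasingRunAt_iff_strictMono h, hrange]
  constructor
  · rintro hσ _ ⟨k, rfl⟩ _ ⟨l, rfl⟩ hkl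
    exact hσ ((blockEmb h).lt_iff_lt.1 hkl)
  · exact fun hσ k l hkl => hσ ⟨k, rfl⟩ ⟨l, rfl⟩ ((blockEmb h).strictMono hkl)

lemma mul_viaEmbedding_mem_increasingRunAt_iff (h : i + m ≤ n) (hij : i + m ≤ j ∨ j + m ≤ i)
    (ρ : Perm (Fin m)) (σ : Perm (Fin n)) :
    σ * ρ.viaEmbedding (blockEmb h).toEmbedding ∈ increasingRunAt n m j ↔
      σ ∈ increasingRunAt n m j := by
  refine exists_congr fun hj => forall₂_congr fun k l => ?_
  have hfix (a : Fin n) (ha : j ≤ a ∧ a < j + m) :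
      (σ * ρ.viaEmbedding (blockEmb h).toEmbedding) a = σ a :=
    congrArg σ <| ρ.viaEmbedding_apply_of_notMem _ a fun hmem => by
      have := mem_range_blockEmb.1 hmem
      omega
  rw [hfix, hfix] <;> simp

lemma increasingRunAt_inter_subset {d : ℕ} (hd : d < m) :
    increasingRunAt n m i ∩ increasingRunAt n m (i + d) ⊆ increasingRunAt n (m + d) i := by
  rintro σ ⟨hfst, hsnd⟩
  have hm := hfst.1
  have hmd := hsnd.1
  rw [mem_increasingRunAt_iff_strictMonoOn hm] at hfst
  rw [mem_increasingRunAt_iff_strictMonoOn hmd] at hsnd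
  rw [mem_increasingRunAt_iff_strictMonoOn (by omega)]
  rintro a ⟨hia, ha⟩ b ⟨hib, hb⟩ hab
  by_cases hbm : b < i + m
  · exact hfst ⟨hia, by omega⟩ ⟨hib, hbm⟩ hab
  by_cases had : i + d ≤ a
  · exact hsnd ⟨had, by omega⟩ ⟨by omega, by omega⟩ hab
  · let c : Fin n := ⟨i + d, by omega⟩
    have hac : a < c := not_le.1 had
    have hcb : c < b :=
      Fin.lt_def.2 (lt_of_lt_of_le (Nat.add_lt_add_left hd i) (Nat.le_of_not_lt hbm))
    have hc : i ≤ (c : ℕ) ∧ (c : ℕ) < i + m := ⟨Nat.le_add_right i d, Nat.add_lt_add_left hd i⟩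
    exact (hfst ⟨hia, lt_trans hac hc.2⟩ hc hac).trans
      (hsnd ⟨le_rfl, by omega⟩ ⟨hcb.le, by omega⟩ hcb)

end IncreasingRuns

section Mallows

open MeasureTheory ProbabilityTheory Equiv
open scoped NNReal

variable {m n i : ℕ} {q : ℝ}

instance permMeasurableSpace : MeasurableSpace (Perm (Fin n)) := ⊤

instance permDiscreteMeasurableSpace : DiscreteMeasurableSpace (Perm (Fin n)) := ⟨fun _ => trivial⟩

/-- The Mallows distribution with parameter `q` on the permutations of `Fin n`, as a measure, for
which the events in `mallowsProb` and the statistics in `mallowsExp` are measured and integrated. -/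
def mallowsMeasure (n : ℕ) (q : ℝ) : Measure (Perm (Fin n)) :=
  ∑ σ, ENNReal.ofReal (q ^ invCount σ / invPoly n q) • Measure.dirac σ

lemma invPoly_pos (hq : 0 ≤ q) (n : ℕ) : 0 < invPoly n q :=
  Finset.prod_pos fun j _ => by
    rw [Finset.sum_range_succ', pow_zero]
    positivity

lemma mallowsExp_natCast_nonneg (hq : 0 ≤ q) (W : Perm (Fin n) → ℕ) :
    0 ≤ mallowsExp q fun σ => (W σ : ℝ) :=
  div_nonneg (Finset.sum_nonneg fun _ _ => by positivity) (invPoly_pos hq n).le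

lemma integral_mallowsMeasure (hq : 0 ≤ q) (X : Perm (Fin n) → ℝ) :
    ∫ σ, X σ ∂mallowsMeasure n q = mallowsExp q X := by
  have hpos := invPoly_pos hq n
  rw [mallowsMeasure, integral_finsetSum_measure fun σ _ =>
    (integrable_dirac (by simp)).smul_measure ENNReal.ofReal_ne_top, mallowsExp, Finset.sum_div]
  refine Finset.sum_congr rfl fun σ _ => ?_
  rw [integral_smul_measure, integral_dirac, ENNReal.toReal_ofReal (by positivity), smul_eq_mul,
    mul_comm, mul_div_assoc]

lemma mallowsMeasure_real (hq : 0 ≤ q) (E : Set (Perm (Fin n))) :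
    (mallowsMeasure n q).real E = mallowsProb q E := by
  rw [← integral_indicator_one .of_discrete, integral_mallowsMeasure hq, mallowsExp, mallowsProb,
    Finset.sum_filter]
  simp only [Set.indicator_apply, Pi.one_apply, ite_mul, one_mul, zero_mul]

lemma isProbabilityMeasure_mallowsMeasure (hq : 0 ≤ q) (n : ℕ) :
    IsProbabilityMeasure (mallowsMeasure n q) := by
  have huniv : (mallowsMeasure n q).real Set.univ = 1 := by
    rw [mallowsMeasure_real hq, mallowsProb]
    simp only [Set.mem_univ, Finset.filter_true]
    rw [sum_pow_invCount, div_self (invPoly_pos hq n).ne']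
  exact ⟨(ENNReal.toReal_eq_one_iff _).1 huniv⟩

lemma dTVNatMallows_eq_tvDist (hq : 0 ≤ q) (W : Perm (Fin n) → ℕ) (r : ℝ≥0) :
    dTVNatMallows q W r = tvDist ((mallowsMeasure n q).map W) (poissonMeasure r) := by
  simp only [dTVNatMallows, tvDist, poissonMeasure_real_singleton, _root_.poissonPMF,
    map_measureReal_apply Measurable.of_discrete (.singleton _), mallowsMeasure_real hq]
  rfl

lemma mallowsMeasure_real_increasingRunAt_inter (hq : 0 ≤ q) (h : i + m ≤ n)
    {E : Set (Perm (Fin n))} (hE : ∀ (ρ : Perm (Fin m)) (σ : Perm (Fin n)),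
      σ * ρ.viaEmbedding (blockEmb h).toEmbedding ∈ E ↔ σ ∈ E) :
    (mallowsMeasure n q).real (increasingRunAt n m i ∩ E) =
      1 / invPoly m q * (mallowsMeasure n q).real E := by
  have hsum := sum_pow_invCount_eq_mul_sum_strictMono q (blockEmb h)
    (ordConnected_range_blockEmb h) hE
  have hpos := invPoly_pos hq m
  rw [sum_pow_invCount] at hsum
  rw [mallowsMeasure_real hq, mallowsMeasure_real hq, mallowsProb, mallowsProb, hsum]
  simp only [Set.mem_inter_iff, mem_increasingRunAt_iff_strictMono h, and_comm]
  field_simp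

lemma mallowsMeasure_real_increasingRunAt (hq : 0 ≤ q) (h : i + m ≤ n) :
    (mallowsMeasure n q).real (increasingRunAt n m i) = 1 / invPoly m q := by
  have := isProbabilityMeasure_mallowsMeasure hq n
  simpa using mallowsMeasure_real_increasingRunAt_inter hq h (E := Set.univ) (by simp)

lemma indepSet_increasingRunAt (hq : 0 ≤ q) (h : i + m ≤ n) {E : Set (Perm (Fin n))}
    (hE : ∀ (ρ : Perm (Fin m)) (σ : Perm (Fin n)),
      σ * ρ.viaEmbedding (blockEmb h).toEmbedding ∈ E ↔ σ ∈ E) :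
    IndepSet (increasingRunAt n m i) E (mallowsMeasure n q) := by
  have := isProbabilityMeasure_mallowsMeasure hq n
  rw [indepSet_iff_measure_inter_eq_mul .of_discrete .of_discrete (mallowsMeasure n q),
    ← ENNReal.toReal_eq_toReal_iff' (measure_ne_top _ _)
      (ENNReal.mul_ne_top (measure_ne_top _ _) (measure_ne_top _ _)), ENNReal.toReal_mul]
  simp only [← measureReal_def]
  rw [mallowsMeasure_real_increasingRunAt_inter hq h hE, mallowsMeasure_real_increasingRunAt hq h]

lemma mallowsMeasure_real_increasingRunAt_inter_le (hq : 0 ≤ q) {d : ℕ} (hd : d < m)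
    (h : i + d + m ≤ n) :
    (mallowsMeasure n q).real (increasingRunAt n m i ∩ increasingRunAt n m (i + d)) ≤
      1 / invPoly (m + d) q := by
  have := isProbabilityMeasure_mallowsMeasure hq n
  rw [← mallowsMeasure_real_increasingRunAt (n := n) (i := i) hq (by omega)]
  exact measureReal_mono (increasingRunAt_inter_subset hd)

end Mallows

section NearPairs

/-- The starting points `j < N` of the blocks of length `m` that meet the one starting at `i`. -/
def overlappingBlocks (N m i : ℕ) : Finset ℕ :=
  (Finset.range N).filter fun j => i < j + m ∧ j < i + m

variable {N m i j : ℕ}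

lemma mem_overlappingBlocks : j ∈ overlappingBlocks N m i ↔ j < N ∧ i < j + m ∧ j < i + m := by
  rw [overlappingBlocks, Finset.mem_filter, Finset.mem_range]

lemma card_overlappingBlocks_le (hm : 0 < m) (N i : ℕ) :
    (overlappingBlocks N m i).card ≤ 2 * m - 1 := by
  have hsub : overlappingBlocks N m i ⊆ Finset.Ico (i + 1 - m) (i + m) := fun j hj => by
    rw [mem_overlappingBlocks] at hj
    rw [Finset.mem_Ico]
    omega
  have hcard := Finset.card_le_card hsub
  rw [Nat.card_Ico] at hcard
  omega

lemma sum_range_sum_filter_lt_eq (N m : ℕ) (f : ℕ → ℕ → ℝ) :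
    ∑ i ∈ Finset.range N, ∑ j ∈ Finset.range N with i < j ∧ j < i + m, f i j =
      ∑ d ∈ Finset.Ico 1 m, ∑ i ∈ Finset.range (N - d), f i (i + d) := by
  have hshift (i : ℕ) : ∑ j ∈ Finset.range N with i < j ∧ j < i + m, f i j =
      ∑ d ∈ Finset.Ico 1 m with i + d < N, f i (i + d) := by
    refine Finset.sum_nbij' (· - i) (i + ·) ?_ ?_ ?_ ?_ ?_ <;>
      simp only [Finset.mem_filter, Finset.mem_range, Finset.mem_Ico] <;> intro k hk
    · omega
    · omega
    · omega
    · omega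
    · rw [Nat.add_sub_of_le hk.2.1.le]
  simp only [hshift]
  refine Finset.sum_comm' fun i d => ?_
  simp only [Finset.mem_filter, Finset.mem_range, Finset.mem_Ico]
  omega

lemma sum_overlappingBlocks_erase_eq (N m : ℕ) {f : ℕ → ℕ → ℝ} (hf : ∀ i j, f i j = f j i) :
    ∑ i ∈ Finset.range N, ∑ j ∈ (overlappingBlocks N m i).erase i, f i j =
      2 * ∑ d ∈ Finset.Ico 1 m, ∑ i ∈ Finset.range (N - d), f i (i + d) := by
  have hsplit (i : ℕ) : ∑ j ∈ (overlappingBlocks N m i).erase i, f i j =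
      ∑ j ∈ Finset.range N with i < j ∧ j < i + m, f i j +
        ∑ j ∈ Finset.range N with j < i ∧ i < j + m, f i j := by
    rw [← Finset.sum_union]
    · congr 1
      ext j
      simp only [Finset.mem_erase, mem_overlappingBlocks, Finset.mem_union, Finset.mem_filter,
        Finset.mem_range]
      omega
    · exact Finset.disjoint_filter.2 fun j _ hij hji => hij.1.not_gt hji.1
  have hsymm : ∑ i ∈ Finset.range N, ∑ j ∈ Finset.range N with j < i ∧ i < j + m, f i j =
      ∑ i ∈ Finset.range N, ∑ j ∈ Finset.range N with i < j ∧ j < i + m, f i j := by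
    rw [Finset.sum_comm' (t' := Finset.range N)
      (s' := fun j => (Finset.range N).filter fun i => j < i ∧ i < j + m)]
    · simp only [hf]
    · intro i j
      simp only [Finset.mem_filter]
      tauto
  simp only [hsplit, Finset.sum_add_distrib, hsymm, sum_range_sum_filter_lt_eq]
  ring

end NearPairs

section PoissonApproximation

open MeasureTheory ProbabilityTheory Equiv
open scoped NNReal

variable {n m i : ℕ} {q : ℝ}

lemma indepSet_increasingRunAt_eventCount (hq : 0 ≤ q) (h : i + m ≤ n) (T : Set ℕ) :
    IndepSet (increasingRunAt n m i)
      (eventCount (Finset.range (n - m + 1) \ overlappingBlocks (n - m + 1) m i)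
        (increasingRunAt n m) ⁻¹' T) (mallowsMeasure n q) := by
  refine indepSet_increasingRunAt hq h fun ρ σ => ?_
  rw [Set.mem_preimage, Set.mem_preimage, eventCount, eventCount]
  congr! 2
  refine Finset.filter_congr fun j hj => mul_viaEmbedding_mem_increasingRunAt_iff h ?_ ρ σ
  rw [Finset.mem_sdiff, Finset.mem_range, mem_overlappingBlocks] at hj
  omega

lemma sum_overlappingBlocks_mul_le (hq : 0 ≤ q) (hm : 0 < m) (hn : m ≤ n) :
    ∑ i ∈ Finset.range (n - m + 1), ∑ j ∈ overlappingBlocks (n - m + 1) m i,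
      (mallowsMeasure n q).real (increasingRunAt n m i) *
        (mallowsMeasure n q).real (increasingRunAt n m j) ≤
      (n - m + 1) * (2 * m - 1) / invPoly m q ^ 2 := by
  have hprob {j : ℕ} (hj : j < n - m + 1) :
      (mallowsMeasure n q).real (increasingRunAt n m j) = 1 / invPoly m q :=
    mallowsMeasure_real_increasingRunAt hq (by omega)
  have hinner : ∀ i ∈ Finset.range (n - m + 1), ∑ j ∈ overlappingBlocks (n - m + 1) m i,
      (mallowsMeasure n q).real (increasingRunAt n m i) *
        (mallowsMeasure n q).real (increasingRunAt n m j) ≤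
      (2 * m - 1) * (1 / invPoly m q * (1 / invPoly m q)) := fun i hi => by
    have hcard : ((overlappingBlocks (n - m + 1) m i).card : ℝ) ≤ 2 * m - 1 := by
      have := card_overlappingBlocks_le hm (n - m + 1) i
      rw [le_sub_iff_add_le]
      norm_cast
      omega
    rw [Finset.sum_congr rfl fun j hj => by
      rw [hprob (Finset.mem_range.1 hi), hprob (mem_overlappingBlocks.1 hj).1], Finset.sum_const,
      nsmul_eq_mul]
    exact mul_le_mul_of_nonneg_right hcard (mul_self_nonneg _)
  refine (Finset.sum_le_sum hinner).trans_eq ?_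
  rw [Finset.sum_const, Finset.card_range, nsmul_eq_mul]
  push_cast [hn]
  ring

lemma sum_overlappingBlocks_erase_inter_le (hq : 0 ≤ q) (hn : m ≤ n) :
    ∑ i ∈ Finset.range (n - m + 1), ∑ j ∈ (overlappingBlocks (n - m + 1) m i).erase i,
      (mallowsMeasure n q).real (increasingRunAt n m i ∩ increasingRunAt n m j) ≤
      2 * ((n - m) * ∑ s ∈ Finset.Icc 1 (m - 1), 1 / invPoly (2 * m - s) q) := by
  have hdiag : ∀ d ∈ Finset.Ico 1 m, ∑ i ∈ Finset.range (n - m + 1 - d),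
      (mallowsMeasure n q).real (increasingRunAt n m i ∩ increasingRunAt n m (i + d)) ≤
        (n - m) * (1 / invPoly (m + d) q) := fun d hd => by
    have hpos := invPoly_pos hq (m + d)
    have hcard : ((n - m + 1 - d : ℕ) : ℝ) ≤ n - m := by
      rw [← Nat.cast_sub hn, Nat.cast_le]
      have := Finset.mem_Ico.1 hd
      omega
    refine (Finset.sum_le_card_nsmul _ _ _ fun i hi =>
      mallowsMeasure_real_increasingRunAt_inter_le hq (Finset.mem_Ico.1 hd).2 ?_).trans ?_
    · have := Finset.mem_range.1 hi
      omega
    · rw [Finset.card_range, nsmul_eq_mul]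
      gcongr
  have hreflect : ∑ s ∈ Finset.Icc 1 (m - 1), 1 / invPoly (2 * m - s) q =
      ∑ d ∈ Finset.Ico 1 m, 1 / invPoly (m + d) q := by
    have hIcc : Finset.Icc 1 (m - 1) = Finset.Ico 1 m := by
      ext s
      simp only [Finset.mem_Icc, Finset.mem_Ico]
      omega
    have hreverse := Finset.sum_Ico_reflect (fun d => 1 / invPoly (m + d) q) 1 m.le_succ
    rw [Nat.add_sub_cancel_left, Nat.add_sub_cancel] at hreverse
    rw [hIcc, ← hreverse]
    refine Finset.sum_congr rfl fun s hs => ?_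
    rw [two_mul, Nat.add_sub_assoc (Finset.mem_Ico.1 hs).2.le]
  rw [sum_overlappingBlocks_erase_eq _ _ fun i j => by rw [Set.inter_comm], hreflect]
  refine mul_le_mul_of_nonneg_left ?_ zero_le_two
  rw [Finset.mul_sum]
  exact Finset.sum_le_sum hdiag

lemma one_sub_exp_neg_div_nonneg {x : ℝ} (hx : 0 ≤ x) : 0 ≤ (1 - Real.exp (-x)) / x :=
  div_nonneg (sub_nonneg.2 (Real.exp_le_one_iff.2 (neg_nonpos.2 hx))) hx

lemma one_sub_exp_neg_div_le_one {x : ℝ} (hx : 0 ≤ x) : (1 - Real.exp (-x)) / x ≤ 1 :=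
  div_le_one_of_le₀ (by linarith [Real.add_one_le_exp (-x)]) hx

lemma localDependenceBound_le (hq : 0 ≤ q) (hm : 2 ≤ m) (hn : 2 * m ≤ n) {x : ℝ} (hx : 0 ≤ x) :
    (1 - Real.exp (-x)) / x * ((n - m + 1) * (2 * m - 1) / invPoly m q ^ 2 +
        2 * ((n - m) * ∑ s ∈ Finset.Icc 1 (m - 1), 1 / invPoly (2 * m - s) q)) ≤
      2 * ((2 * m * n - 3 * m ^ 2 + m) / invPoly m q ^ 2 +
        (3 * m - 3 * m ^ 2 - 2 * n + 2 * m * n) *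
          ∑ s ∈ Finset.Icc 1 (m - 1), 1 / invPoly (2 * m - s) q) := by
  have hm' : (2 : ℝ) ≤ m := mod_cast hm
  have hn' : 2 * (m : ℝ) ≤ n := mod_cast hn
  have hsum : 0 ≤ ∑ s ∈ Finset.Icc 1 (m - 1), 1 / invPoly (2 * m - s) q :=
    Finset.sum_nonneg fun s _ => one_div_nonneg.2 (invPoly_pos hq _).le
  have hone : ((n : ℝ) - m + 1) * (2 * m - 1) ≤ 2 * (2 * m * n - 3 * m ^ 2 + m) := by nlinarith
  have htwo : (n : ℝ) - m ≤ 3 * m - 3 * m ^ 2 - 2 * n + 2 * m * n := by nlinarith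
  have hnonneg : 0 ≤ ((n : ℝ) - m + 1) * (2 * m - 1) / invPoly m q ^ 2 +
      2 * ((n - m) * ∑ s ∈ Finset.Icc 1 (m - 1), 1 / invPoly (2 * m - s) q) :=
    add_nonneg
      (div_nonneg (mul_nonneg (by linarith) (by linarith)) (sq_nonneg _))
      (mul_nonneg zero_le_two (mul_nonneg (by linarith) hsum))
  refine (mul_le_of_le_one_left hnonneg (one_sub_exp_neg_div_le_one hx)).trans ?_
  rw [mul_add, ← mul_div_assoc]
  gcongr

theorem stmt16_general (q : ℝ) (hq : 0 ≤ q) (n m : ℕ) (hm : 0 < m) (hn : m ≤ n)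
    (W : Perm (Fin n) → ℕ)
    (hW : ∀ σ, W σ = ((Finset.range (n - m + 1)).filter fun i =>
        OccursConsec (Equiv.refl (Fin m)) σ i).card)
    (EW : ℝ) (hEW : EW = mallowsExp q fun σ => (W σ : ℝ)) :
    dTVNatMallows q W EW ≤ (1 - Real.exp (-EW)) / EW *
      ((n - m + 1) * (2 * m - 1) / invPoly m q ^ 2 +
        2 * ((n - m) * ∑ s ∈ Finset.Icc 1 (m - 1), 1 / invPoly (2 * m - s) q)) := by
  obtain rfl : W = eventCount (Finset.range (n - m + 1)) (increasingRunAt n m) := funext hW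
  have := isProbabilityMeasure_mallowsMeasure hq n
  have hmean : EW = ∑ i ∈ Finset.range (n - m + 1),
      (mallowsMeasure n q).real (increasingRunAt n m i) := by
    rw [hEW, ← integral_mallowsMeasure hq, integral_cast_eventCount fun _ _ => .of_discrete]
  have hpos : 0 < EW := by
    rw [hmean]
    refine Finset.sum_pos (fun i hi => ?_) (Finset.nonempty_range_iff.2 (Nat.succ_ne_zero _))
    rw [mallowsMeasure_real_increasingRunAt hq (by have := Finset.mem_range.1 hi; omega)]
    exact one_div_pos.2 (invPoly_pos hq m)
  lift EW to ℝ≥0 using hpos.le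
  rw [dTVNatMallows_eq_tvDist hq]
  refine (tvDist_map_eventCount_poissonMeasure_le (overlappingBlocks (n - m + 1) m)
    (fun i hi => ?_) (fun i _ => Finset.filter_subset _ _) (fun _ _ => .of_discrete)
    (fun i hi T => indepSet_increasingRunAt_eventCount hq ?_ T) hpos hmean).trans ?_
  · rw [mem_overlappingBlocks]
    exact ⟨Finset.mem_range.1 hi, by omega, by omega⟩
  · have := Finset.mem_range.1 hi
    omega
  · rw [Finset.sum_add_distrib]
    gcongr
    · exact one_sub_exp_neg_div_nonneg hpos.le
    · exact sum_overlappingBlocks_mul_le hq hm hn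
    · exact sum_overlappingBlocks_erase_inter_le hq hn

end PoissonApproximation

/-- Proposition: Poisson approximation for the number of increasing blocks of `m`
consecutive positions of a Mallows(q) permutation of `[n]`. -/
theorem stmt16 (q : ℝ) (hq : 0 < q) (n m : ℕ) (hm : 2 ≤ m) (hn : 2 * m ≤ n)
    (W : Equiv.Perm (Fin n) → ℕ)
    (hW : ∀ σ, W σ = ((Finset.range (n - m + 1)).filter fun i =>
        OccursConsec (Equiv.refl (Fin m)) σ i).card)
    (EW b1 b2 : ℝ)
    (hEW : EW = mallowsExp q fun σ => (W σ : ℝ))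
    (hb1 : b1 = (2 * (m : ℝ) * (n : ℝ) - 3 * (m : ℝ) ^ 2 + (m : ℝ)) / (invPoly m q) ^ 2)
    (hb2 : b2 = (3 * (m : ℝ) - 3 * (m : ℝ) ^ 2 - 2 * (n : ℝ) + 2 * (m : ℝ) * (n : ℝ))
        * ∑ s ∈ Finset.Icc 1 (m - 1), 1 / invPoly (2 * m - s) q) :
    dTVNatMallows q W EW ≤ 2 * (b1 + b2) := by
  subst hb1 hb2
  exact (stmt16_general q hq.le n m (by omega) (by omega) W hW EW hEW).trans
    (localDependenceBound_le hq.le hm hn (hEW ▸ mallowsExp_natCast_nonneg hq.le W))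

end
end
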